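/- For every integer k and every integer N ≥ 0 one has: (i) (1−χ)ρ^k and (1−χ)|ρ|^k belong to 𝒮_0^k, uniformly for z ∈ Z₁ ∪ Z₂ ∪ Z₃; (ii) for z ∈ Z₁(1/2−ε) with 0 < ε ≪ 1, h^{k₋/4}χρ^k and h^{k₋/4}χ|ρ|^k belong to 𝒮^{−N}_{1/2−ε}, where k₋ = 0 if k ≥ 0 and k₋ = |k| if k < 0; (iii) for z ∈ Z₂ ∪ Z₃, χρ^k and χ|ρ|^k belong to 𝒮_0^{−N}. -/

import Mathlib

/- Setting: the cotangent bundle T*Γ of the boundary Γ (dimension n = d−1) is modelled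
in local coordinates by `ℝ^n × ℝ^n`.  The data are: `R₀`, the (positive definite,
symmetric) matrix of the principal symbol `r₀(x',ξ') = ⟨R₀(x')ξ',ξ'⟩` of `−Δ_Γ`, and
`n₀ = n|_Γ > 0`.  `ρ = √(−r₀ + z n₀)` is the square root with `Im ρ > 0`, and
`η = φ₀(r₀/δ₀)` is the cutoff localizing near `ξ' = 0`. -/

open scoped ENNReal

noncomputable section

variable (n : ℕ)

/-- Mixed derivative `∂_{x'}^α ∂_{ξ'}^β a` evaluated on directions `v`, `w`. -/
def Dmix (a : (EuclideanSpace ℝ (Fin n)) × (EuclideanSpace ℝ (Fin n)) → ℂ) (α β : ℕ)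
    (v : Fin α → EuclideanSpace ℝ (Fin n)) (w : Fin β → EuclideanSpace ℝ (Fin n))
    (p : (EuclideanSpace ℝ (Fin n)) × (EuclideanSpace ℝ (Fin n))) : ℂ :=
  iteratedFDeriv ℝ (α + β) a p
    (Fin.append (fun i => ((v i), (0 : EuclideanSpace ℝ (Fin n))))
      (fun i => ((0 : EuclideanSpace ℝ (Fin n)), w i)))

/-- The Japanese bracket `⟨ξ'⟩`. -/
def jap {n : ℕ} (ξ : EuclideanSpace ℝ (Fin n)) : ℝ := Real.sqrt (1 + ‖ξ‖ ^ 2)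

/-- `z ∈ Z₁ ∪ Z₂ ∪ Z₃`. -/
def Zall (z : ℂ) : Prop :=
  (z.re = 1 ∧ 0 < |z.im| ∧ |z.im| ≤ 1) ∨ (z.re = -1 ∧ |z.im| ≤ 1) ∨
    (|z.re| ≤ 1 ∧ |z.im| = 1)

/-- The square root of `w` with nonnegative imaginary part (for `w ∉ [0,∞)` this is the
square root with strictly positive imaginary part). -/
def ssqrt (w : ℂ) : ℂ :=
  if 0 ≤ (w ^ (1 / 2 : ℂ)).im then w ^ (1 / 2 : ℂ) else -(w ^ (1 / 2 : ℂ))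

/-- The principal symbol `r₀(x',ξ') = ⟨R₀(x')ξ',ξ'⟩` of `−Δ_Γ`. -/
def rZero (R₀ : EuclideanSpace ℝ (Fin n) → (EuclideanSpace ℝ (Fin n) →L[ℝ] EuclideanSpace ℝ (Fin n)))
    (p : (EuclideanSpace ℝ (Fin n)) × (EuclideanSpace ℝ (Fin n))) : ℝ :=
  (inner ℝ (R₀ p.1 p.2) p.2 : ℝ)

/-- `ρ(x',ξ',z) = √(−r₀(x',ξ') + z n₀(x'))`, branch with `Im ρ > 0`. -/
def rho (R₀ : EuclideanSpace ℝ (Fin n) → (EuclideanSpace ℝ (Fin n) →L[ℝ] EuclideanSpace ℝ (Fin n)))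
    (n₀ : EuclideanSpace ℝ (Fin n) → ℝ) (z : ℂ)
    (p : (EuclideanSpace ℝ (Fin n)) × (EuclideanSpace ℝ (Fin n))) : ℂ :=
  ssqrt (-(rZero n R₀ p : ℂ) + z * (n₀ p.1 : ℂ))


/-- `z ∈ Z₁` : `Re z = 1`, `0 < |Im z| ≤ 1`. -/
def Zone (z : ℂ) : Prop := z.re = 1 ∧ 0 < |z.im| ∧ |z.im| ≤ 1

/-- `z ∈ Z₁(ε)` : `z ∈ Z₁` and `h^ε ≤ |Im z| ≤ 1`. -/
def ZoneEps (h ε : ℝ) (z : ℂ) : Prop := Zone z ∧ h ^ ε ≤ |z.im|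

/-- `z ∈ Z₂ ∪ Z₃`. -/
def Ztwothree (z : ℂ) : Prop := (z.re = -1 ∧ |z.im| ≤ 1) ∨ (|z.re| ≤ 1 ∧ |z.im| = 1)

/-- `k₋ = 0` if `k ≥ 0`, `k₋ = |k|` if `k < 0`. -/
def kminus (k : ℤ) : ℤ := if k < 0 then -k else 0

/- Write `u = r₀ - z n₀ = -ρ²`. For `z` in `Z₁ ∪ Z₂ ∪ Z₃` the values of `u` avoid `(-∞, 0]`, so
`ρ ^ k` and `|ρ| ^ k` are of the form `exp (b (log u))` with `b` real linear, and each satisfies a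
first order equation `Df = f • g` whose coefficient `g` is a combination of components of `u⁻¹ Du`.
Dilate the fibres by `⟨ξ'⟩` near each point: then every derivative of `u` is `O(⟨ξ'⟩²)`, and
induction on the order of differentiation along `Df = f • g` shows that a derivative of order `j`
of `f` is `O(|ρ|^k (1 + ⟨ξ'⟩² / |ρ|²)^j)`. All three estimates are this one bound, combined with
the lower bound for `|ρ|` available in the region at hand: `|ρ|` is comparable to `⟨ξ'⟩` away from
the glancing set or for `z ∈ Z₂ ∪ Z₃`, and `|ρ| ≥ C √|Im z|` with `⟨ξ'⟩` bounded near it. -/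

theorem sq_ssqrt (w : ℂ) : ssqrt w ^ 2 = w := by
  rw [ssqrt, ← Complex.cpow_nat_inv_pow w two_ne_zero]
  split_ifs <;> simp

theorem ssqrt_im_nonneg (w : ℂ) : 0 ≤ (ssqrt w).im := by
  rw [ssqrt]
  split_ifs with h
  · exact h
  · rw [Complex.neg_im]
    linarith

theorem exp_log_div_two_re_pos {u : ℂ} (hu : u ∈ Complex.slitPlane) :
    0 < (Complex.exp (Complex.log u / 2)).re := by
  have harg : u.arg < Real.pi :=
    (Complex.arg_le_pi u).lt_of_ne (Complex.mem_slitPlane_iff_arg.1 hu).1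
  have him : (Complex.log u / 2).im = u.arg / 2 := by
    rw [← Complex.log_im]
    exact Complex.div_ofNat_im _ 2
  rw [Complex.exp_re, him]
  have := Complex.neg_pi_lt_arg u
  exact mul_pos (Real.exp_pos _) (Real.cos_pos_of_mem_Ioo ⟨by linarith, by linarith⟩)

theorem ssqrt_neg {u : ℂ} (hu : u ∈ Complex.slitPlane) :
    ssqrt (-u) = Complex.I * Complex.exp (Complex.log u / 2) := by
  have hsq : ssqrt (-u) ^ 2 = (Complex.I * Complex.exp (Complex.log u / 2)) ^ 2 := by
    rw [sq_ssqrt, mul_pow, Complex.I_sq, ← Complex.exp_nat_mul, Nat.cast_ofNat,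
      mul_div_cancel₀ _ two_ne_zero, Complex.exp_log (Complex.slitPlane_ne_zero hu), neg_one_mul]
  refine (sq_eq_sq_iff_eq_or_eq_neg.1 hsq).resolve_right fun hneg => ?_
  have him := ssqrt_im_nonneg (-u)
  rw [hneg, Complex.neg_im, Complex.I_mul_im] at him
  linarith [exp_log_div_two_re_pos hu]

theorem kminus_nonneg (k : ℤ) : 0 ≤ kminus k := by
  rw [kminus]
  split_ifs <;> omega

theorem zpow_le_of_comparable {κ σ x y : ℝ} (hy : 0 < y) (hx : 0 < x) (hyx : y ≤ κ * x)
    (hxy : x ≤ κ * σ⁻¹ * y) (k : ℤ) : y ^ k ≤ κ ^ |k| * σ⁻¹ ^ kminus k * x ^ k := by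
  rcases lt_or_ge k 0 with hk | hk
  · have hκσ : x * y⁻¹ ≤ κ * σ⁻¹ := by rwa [← div_eq_mul_inv, div_le_iff₀ hy]
    have := zpow_le_zpow_left₀ (neg_nonneg.2 hk.le) (by positivity) hκσ
    rw [mul_zpow, inv_zpow', neg_neg, zpow_neg x, inv_mul_le_iff₀ (by positivity), mul_zpow,
      mul_comm] at this
    rwa [abs_of_neg hk, kminus, if_pos hk]
  · have := zpow_le_zpow_left₀ hk hy.le hyx
    rw [mul_zpow] at this
    rwa [abs_of_nonneg hk, kminus, if_neg hk.not_gt, zpow_zero, mul_one]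

theorem rpow_le_rpow_abs_mul_rpow {x K : ℝ} (hx : 1 ≤ x) (hxK : x ≤ K) (s t : ℝ) :
    x ^ s ≤ K ^ |s - t| * x ^ t := by
  have hx₀ : 0 < x := zero_lt_one.trans_le hx
  calc x ^ s = x ^ (s - t) * x ^ t := by rw [← Real.rpow_add hx₀, sub_add_cancel]
    _ ≤ x ^ |s - t| * x ^ t := by gcongr; exact le_abs_self _
    _ ≤ K ^ |s - t| * x ^ t := by gcongr

theorem zpow_mul_inv_pow_eq_rpow {x : ℝ} (hx : 0 < x) (k : ℤ) (β : ℕ) :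
    x ^ k * x⁻¹ ^ β = x ^ ((k : ℝ) - β) := by
  rw [Real.rpow_sub hx, Real.rpow_intCast, Real.rpow_natCast, inv_pow, div_eq_mul_inv]

theorem rpow_mul_inv_sqrt_zpow_mul_inv_sqrt_pow_le {h ε y : ℝ} (hh : h ∈ Set.Ioc (0 : ℝ) 1)
    (hε : 0 ≤ ε) (hy : h ^ (1 / 2 - ε) ≤ y) {m : ℤ} (hm : 0 ≤ m) (j : ℕ) :
    h ^ ((m : ℝ) / 4) * ((√y)⁻¹ ^ m * (√y)⁻¹ ^ (2 * j)) ≤ h ^ (-(1 / 2 - ε) * (j : ℝ)) := by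
  have hh₀ := hh.1
  have : (0 : ℝ) ≤ m := by exact_mod_cast hm
  have hsqrt : (√y)⁻¹ ≤ h ^ (-(1 / 2 - ε) / 2) := by
    rw [neg_div, Real.rpow_neg hh₀.le]
    refine inv_anti₀ (Real.rpow_pos_of_pos hh₀ _) (Real.le_sqrt_of_sq_le ?_)
    rwa [← Real.rpow_natCast, ← Real.rpow_mul hh₀.le, Nat.cast_ofNat,
      div_mul_cancel₀ _ two_ne_zero]
  calc h ^ ((m : ℝ) / 4) * ((√y)⁻¹ ^ m * (√y)⁻¹ ^ (2 * j))
      ≤ h ^ ((m : ℝ) / 4) *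
          ((h ^ (-(1 / 2 - ε) / 2)) ^ m * (h ^ (-(1 / 2 - ε) / 2)) ^ (2 * j)) := by
        gcongr
        exact zpow_le_zpow_left₀ hm (by positivity) hsqrt
    _ = h ^ (ε * m / 2 + -(1 / 2 - ε) * (j : ℝ)) := by
        rw [← Real.rpow_intCast, ← Real.rpow_natCast, ← Real.rpow_mul hh₀.le,
          ← Real.rpow_mul hh₀.le, ← Real.rpow_add hh₀, ← Real.rpow_add hh₀]
        push_cast
        ring_nf
    _ ≤ h ^ (-(1 / 2 - ε) * (j : ℝ)) :=
        Real.rpow_le_rpow_of_exponent_ge hh₀ hh.2 (le_add_of_nonneg_left (by positivity))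

section DerivBounds

variable {ι E F G H : Type*} [NormedAddCommGroup E] [NormedSpace ℝ E]
  [NormedAddCommGroup F] [NormedSpace ℝ F] [NormedAddCommGroup G] [NormedSpace ℝ G]
  [NormedAddCommGroup H] [NormedSpace ℝ H]
  {p : ι → E} {A B L M : ι → ℝ} {m : ℕ} {f f₁ f₂ : ι → E → F} {g : ι → E → G}

/-- The derivatives of order at most `m` of the functions `f i` at the points `p i` are
`O(A i * L i ^ j)`, uniformly in `i`: the amplitude of `f i` near `p i` is `A i` and its length
scale is `(L i)⁻¹`. -/
def DerivBoundsUpTo (f : ι → E → F) (p : ι → E) (A L : ι → ℝ) (m : ℕ) : Prop :=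
  ∃ C : ℝ, 0 ≤ C ∧ ∀ i, ∀ j ≤ m, ‖iteratedFDeriv ℝ j (f i) (p i)‖ ≤ C * A i * L i ^ j

/-- A family of smooth functions whose derivatives of every order satisfy `DerivBoundsUpTo`. The
length scales are taken to be at most one, which lets constants have every scale. -/
structure DerivBounds (f : ι → E → F) (p : ι → E) (A L : ι → ℝ) : Prop where
  contDiff : ∀ i, ContDiff ℝ (⊤ : ℕ∞) (f i)
  amplitude_nonneg : ∀ i, 0 ≤ A i
  one_le : ∀ i, 1 ≤ L i
  upTo : ∀ m, DerivBoundsUpTo f p A L m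

/-- The space `C_b^∞` of smooth functions all of whose derivatives are bounded. -/
structure BoundedSmooth (f : E → F) : Prop where
  contDiff : ContDiff ℝ (⊤ : ℕ∞) f
  bounded : ∀ m : ℕ, ∃ C : ℝ, ∀ x, ‖iteratedFDeriv ℝ m f x‖ ≤ C

theorem sum_choose_mul_le_two_pow {j m : ℕ} (hj : j ≤ m) {x : ℕ → ℝ} {K : ℝ} (hK : 0 ≤ K)
    (hx : ∀ l ≤ j, x l ≤ K) :
    ∑ l ∈ Finset.range (j + 1), (j.choose l : ℝ) * x l ≤ 2 ^ m * K := by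
  calc ∑ l ∈ Finset.range (j + 1), (j.choose l : ℝ) * x l
      ≤ ∑ l ∈ Finset.range (j + 1), (j.choose l : ℝ) * K :=
        Finset.sum_le_sum fun l hl => mul_le_mul_of_nonneg_left
          (hx l (Nat.lt_succ_iff.1 (Finset.mem_range.1 hl))) (Nat.cast_nonneg _)
    _ = 2 ^ j * K := by rw [← Finset.sum_mul]; exact_mod_cast congrArg (· * K) (by
          exact_mod_cast Nat.sum_range_choose j)
    _ ≤ 2 ^ m * K := by gcongr; norm_num

theorem exists_norm_iteratedFDeriv_le_of_hasCompactSupport {φ : F → G}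
    (sφ : ContDiff ℝ (⊤ : ℕ∞) φ) (hφ : HasCompactSupport φ) (m : ℕ) :
    ∃ D : ℝ, 0 ≤ D ∧ ∀ l ≤ m, ∀ y, ‖iteratedFDeriv ℝ l φ y‖ ≤ D := by
  have hbdd : ∀ l, ∃ D, ∀ y, ‖iteratedFDeriv ℝ l φ y‖ ≤ D := fun l =>
    (hφ.iteratedFDeriv l).exists_bound_of_continuous
      (sφ.continuous_iteratedFDeriv (by exact_mod_cast le_top))
  choose D hD using hbdd
  have hD₀ : ∀ l, 0 ≤ D l := fun l => (norm_nonneg _).trans (hD l 0)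
  exact ⟨∑ l ∈ Finset.range (m + 1), D l, Finset.sum_nonneg fun l _ => hD₀ l, fun l hl y =>
    (hD l y).trans (Finset.single_le_sum (fun l _ => hD₀ l)
      (Finset.mem_range.2 (Nat.lt_succ_iff.2 hl)))⟩

theorem DerivBoundsUpTo.bilinear (b : F →L[ℝ] G →L[ℝ] H)
    (hf : DerivBoundsUpTo f p A L m) (hg : DerivBoundsUpTo g p B L m)
    (sf : ∀ i, ContDiff ℝ (⊤ : ℕ∞) (f i)) (sg : ∀ i, ContDiff ℝ (⊤ : ℕ∞) (g i))
    (hL : ∀ i, 0 ≤ L i) :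
    DerivBoundsUpTo (fun i q => b (f i q) (g i q)) p (fun i => A i * B i) L m := by
  obtain ⟨C, hC, hf⟩ := hf
  obtain ⟨D, hD, hg⟩ := hg
  refine ⟨‖b‖ * 2 ^ m * (C * D), by positivity, fun i j hj => ?_⟩
  have hCA : 0 ≤ C * A i := by simpa using (norm_nonneg _).trans (hf i 0 m.zero_le)
  have hDB : 0 ≤ D * B i := by simpa using (norm_nonneg _).trans (hg i 0 m.zero_le)
  have hLj : 0 ≤ L i ^ j := pow_nonneg (hL i) j
  have leibniz_term : ∀ l ≤ j,
      ‖iteratedFDeriv ℝ l (f i) (p i)‖ * ‖iteratedFDeriv ℝ (j - l) (g i) (p i)‖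
        ≤ C * A i * (D * B i) * L i ^ j := by
    intro l hl
    have hfl := hf i l (hl.trans hj)
    calc _ ≤ (C * A i * L i ^ l) * (D * B i * L i ^ (j - l)) :=
          mul_le_mul hfl (hg i (j - l) ((Nat.sub_le _ _).trans hj)) (norm_nonneg _)
            ((norm_nonneg _).trans hfl)
      _ = C * A i * (D * B i) * (L i ^ l * L i ^ (j - l)) := by ring
      _ = C * A i * (D * B i) * L i ^ j := by rw [← pow_add, Nat.add_sub_cancel' hl]
  calc ‖iteratedFDeriv ℝ j (fun q => b (f i q) (g i q)) (p i)‖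
      ≤ ‖b‖ * ∑ l ∈ Finset.range (j + 1), (j.choose l : ℝ) *
          ‖iteratedFDeriv ℝ l (f i) (p i)‖ * ‖iteratedFDeriv ℝ (j - l) (g i) (p i)‖ :=
        b.norm_iteratedFDeriv_le_of_bilinear (sf i) (sg i) (p i) (by exact_mod_cast le_top)
    _ ≤ ‖b‖ * (2 ^ m * (C * A i * (D * B i) * L i ^ j)) := by
        simp only [mul_assoc (Nat.cast _ : ℝ)]
        gcongr
        exact sum_choose_mul_le_two_pow hj (by positivity) leibniz_term
    _ = ‖b‖ * 2 ^ m * (C * D) * (A i * B i) * L i ^ j := by ring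

theorem DerivBoundsUpTo.of_forall_order
    (h : ∀ j ≤ m, ∃ C : ℝ, ∀ i, ‖iteratedFDeriv ℝ j (f i) (p i)‖ ≤ C * A i * L i ^ j)
    (hA : ∀ i, 0 ≤ A i) (hL : ∀ i, 0 ≤ L i) : DerivBoundsUpTo f p A L m := by
  choose! C hC using h
  refine ⟨∑ j ∈ Finset.range (m + 1), |C j|, Finset.sum_nonneg fun _ _ => abs_nonneg _,
    fun i j hj => (hC j hj i).trans ?_⟩
  have : C j ≤ ∑ j ∈ Finset.range (m + 1), |C j| := (le_abs_self _).trans <|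
    Finset.single_le_sum (f := fun j => |C j|) (fun _ _ => abs_nonneg _)
      (Finset.mem_range.2 (Nat.lt_succ_iff.2 hj))
  have := hA i
  have := hL i
  gcongr

theorem DerivBoundsUpTo.of_le {l : ℕ} (hf : DerivBoundsUpTo f p A L m) (hlm : l ≤ m) :
    DerivBoundsUpTo f p A L l := by
  obtain ⟨C, hC, h⟩ := hf
  exact ⟨C, hC, fun i j hj => h i j (hj.trans hlm)⟩

theorem DerivBoundsUpTo.succ_of_fderiv {K : ℝ} (hf : ∀ i, ‖f i (p i)‖ ≤ K * A i)
    (hf' : DerivBoundsUpTo (fun i => fderiv ℝ (f i)) p (fun i => A i * L i) L m)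
    (hA : ∀ i, 0 ≤ A i) (hL : ∀ i, 0 ≤ L i) : DerivBoundsUpTo f p A L (m + 1) := by
  refine .of_forall_order (fun j hj => ?_) hA hL
  rcases j with _ | j
  · exact ⟨K, fun i => by simpa using hf i⟩
  · obtain ⟨C, -, h⟩ := hf'
    refine ⟨C, fun i => ?_⟩
    rw [← norm_iteratedFDeriv_fderiv]
    exact (h i j (Nat.succ_le_succ_iff.1 hj)).trans_eq (by ring)

namespace DerivBounds

theorem length_nonneg (hf : DerivBounds f p A L) (i : ι) : 0 ≤ L i :=
  zero_le_one.trans (hf.one_le i)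

theorem of_forall_order (sf : ∀ i, ContDiff ℝ (⊤ : ℕ∞) (f i)) (hA : ∀ i, 0 ≤ A i)
    (hL : ∀ i, 1 ≤ L i)
    (h : ∀ j, ∃ C : ℝ, ∀ i, ‖iteratedFDeriv ℝ j (f i) (p i)‖ ≤ C * A i * L i ^ j) :
    DerivBounds f p A L :=
  ⟨sf, hA, hL, fun _ => .of_forall_order (fun j _ => h j) hA fun i => zero_le_one.trans (hL i)⟩

theorem exists_norm_le (hf : DerivBounds f p A L) :
    ∃ C : ℝ, 0 ≤ C ∧ ∀ i, ‖f i (p i)‖ ≤ C * A i := by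
  obtain ⟨C, hC, h⟩ := hf.upTo 0
  exact ⟨C, hC, fun i => by simpa using h i 0 le_rfl⟩

theorem mono (hf : DerivBounds f p A L) {K : ℝ} (hAB : ∀ i, A i ≤ K * B i) (hB : ∀ i, 0 ≤ B i)
    (hLM : ∀ i, L i ≤ M i) : DerivBounds f p B M := by
  refine .of_forall_order hf.contDiff hB (fun i => (hf.one_le i).trans (hLM i)) fun j => ?_
  obtain ⟨C, hC, h⟩ := hf.upTo j
  refine ⟨C * K, fun i => (h i j le_rfl).trans ?_⟩
  have hL := hf.length_nonneg i
  have hA : 0 ≤ K * B i := (hf.amplitude_nonneg i).trans (hAB i)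
  calc C * A i * L i ^ j ≤ C * (K * B i) * M i ^ j := by gcongr; exacts [hAB i, hLM i]
    _ = C * K * B i * M i ^ j := by ring

theorem const {c : ι → F} {K : ℝ} (hc : ∀ i, ‖c i‖ ≤ K * A i) (hA : ∀ i, 0 ≤ A i)
    (hL : ∀ i, 1 ≤ L i) : DerivBounds (fun i (_ : E) => c i) p A L := by
  refine .of_forall_order (fun _ => contDiff_const) hA hL fun j => ⟨K, fun i => ?_⟩
  rcases Nat.eq_zero_or_pos j with rfl | hj
  · simpa using hc i
  · rw [iteratedFDeriv_const_of_ne hj.ne', Pi.zero_apply, norm_zero]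
    exact mul_nonneg ((norm_nonneg _).trans (hc i)) (pow_nonneg (zero_le_one.trans (hL i)) j)

theorem add (hf : DerivBounds f₁ p A L) (hg : DerivBounds f₂ p A L) :
    DerivBounds (fun i q => f₁ i q + f₂ i q) p A L := by
  refine .of_forall_order (fun i => (hf.contDiff i).add (hg.contDiff i)) hf.amplitude_nonneg
    hf.one_le fun j => ?_
  obtain ⟨C, -, hC⟩ := hf.upTo j
  obtain ⟨D, -, hD⟩ := hg.upTo j
  refine ⟨C + D, fun i => ?_⟩
  have hj : (j : WithTop ℕ∞) ≤ (⊤ : ℕ∞) := by exact_mod_cast le_top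
  rw [fun_iteratedFDeriv_add_apply ((hf.contDiff i).of_le hj).contDiffAt
    ((hg.contDiff i).of_le hj).contDiffAt, add_mul, add_mul]
  exact (norm_add_le _ _).trans (add_le_add (hC i j le_rfl) (hD i j le_rfl))

theorem bilinear (b : F →L[ℝ] G →L[ℝ] H) (hf : DerivBounds f p A L) (hg : DerivBounds g p B L) :
    DerivBounds (fun i q => b (f i q) (g i q)) p (fun i => A i * B i) L where
  contDiff i := b.isBoundedBilinearMap.contDiff.comp ((hf.contDiff i).prodMk (hg.contDiff i))
  amplitude_nonneg i := mul_nonneg (hf.amplitude_nonneg i) (hg.amplitude_nonneg i)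
  one_le := hf.one_le
  upTo m := (hf.upTo m).bilinear b (hg.upTo m) hf.contDiff hg.contDiff hf.length_nonneg

theorem clm_apply (b : F →L[ℝ] G) (hf : DerivBounds f p A L) :
    DerivBounds (fun i q => b (f i q)) p A L := by
  refine .of_forall_order (fun i => b.contDiff.comp (hf.contDiff i)) hf.amplitude_nonneg
    hf.one_le fun j => ?_
  obtain ⟨C, -, h⟩ := hf.upTo j
  refine ⟨‖b‖ * C, fun i => ?_⟩
  calc ‖iteratedFDeriv ℝ j (b ∘ f i) (p i)‖ ≤ ‖b‖ * ‖iteratedFDeriv ℝ j (f i) (p i)‖ :=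
        b.norm_iteratedFDeriv_comp_left (hf.contDiff i).contDiffAt (by exact_mod_cast le_top)
    _ ≤ ‖b‖ * (C * A i * L i ^ j) := by gcongr; exact h i j le_rfl
    _ = ‖b‖ * C * A i * L i ^ j := by ring

protected theorem fderiv (hf : DerivBounds f p A L) :
    DerivBounds (fun i => fderiv ℝ (f i)) p (fun i => A i * L i) L := by
  refine .of_forall_order (fun i => (hf.contDiff i).fderiv_right (by exact_mod_cast le_rfl))
    (fun i => mul_nonneg (hf.amplitude_nonneg i) (hf.length_nonneg i)) hf.one_le fun j => ?_
  obtain ⟨C, -, h⟩ := hf.upTo (j + 1)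
  refine ⟨C, fun i => ?_⟩
  rw [norm_iteratedFDeriv_fderiv]
  exact (h i (j + 1) le_rfl).trans_eq (by ring)

theorem of_fderiv (sf : ∀ i, ContDiff ℝ (⊤ : ℕ∞) (f i)) {K : ℝ}
    (hf : ∀ i, ‖f i (p i)‖ ≤ K * A i) (hA : ∀ i, 0 ≤ A i)
    (hf' : DerivBounds (fun i => fderiv ℝ (f i)) p (fun i => A i * L i) L) :
    DerivBounds f p A L where
  contDiff := sf
  amplitude_nonneg := hA
  one_le := hf'.one_le
  upTo m := (DerivBoundsUpTo.succ_of_fderiv hf (hf'.upTo m) hA hf'.length_nonneg).of_le m.le_succ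

theorem continuousLinearMap {T : ι → E →L[ℝ] F} (hT : ∀ i, ‖T i‖ ≤ A i)
    (hTp : ∀ i, ‖T i (p i)‖ ≤ A i) (hL : ∀ i, 1 ≤ L i) :
    DerivBounds (fun i q => T i q) p A L := by
  have hA : ∀ i, 0 ≤ A i := fun i => (norm_nonneg _).trans (hT i)
  have hfderiv : (fun i => fderiv ℝ fun q => T i q) = fun i _ => T i :=
    funext fun i => funext fun _ => (T i).fderiv
  refine .of_fderiv (K := 1) (fun i => (T i).contDiff) (by simpa using hTp) hA ?_
  rw [hfderiv]
  refine .const (K := 1) (fun i => ?_) (fun i => mul_nonneg (hA i) (zero_le_one.trans (hL i))) hL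
  rw [one_mul]
  exact (hT i).trans (le_mul_of_one_le_right (hA i) (hL i))

theorem of_fderiv_eq_smul {𝕜 : Type*} [NormedField 𝕜] [NormedAlgebra ℝ 𝕜] {f : ι → E → 𝕜}
    {g : ι → E → E →L[ℝ] 𝕜} (sf : ∀ i, ContDiff ℝ (⊤ : ℕ∞) (f i))
    (sg : ∀ i, ContDiff ℝ (⊤ : ℕ∞) (g i)) (hfg : ∀ i q, fderiv ℝ (f i) q = f i q • g i q)
    (hL : ∀ i, 1 ≤ L i)
    (hg : ∀ m, DerivBoundsUpTo f p (fun i => ‖f i (p i)‖) L m → DerivBoundsUpTo g p L L m) :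
    DerivBounds f p (fun i => ‖f i (p i)‖) L where
  contDiff := sf
  amplitude_nonneg _ := norm_nonneg _
  one_le := hL
  upTo m := by
    have hL₀ : ∀ i, 0 ≤ L i := fun i => zero_le_one.trans (hL i)
    have hfderiv : (fun i => fderiv ℝ (f i)) = fun i q => f i q • g i q :=
      funext fun i => funext (hfg i)
    induction m with
    | zero =>
      refine .of_forall_order (fun j hj => ⟨1, fun i => ?_⟩) (fun _ => norm_nonneg _) hL₀
      obtain rfl : j = 0 := Nat.le_zero.1 hj
      simp
    | succ m ih =>
      refine .succ_of_fderiv (K := 1) (by simp) ?_ (fun _ => norm_nonneg _) hL₀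
      rw [hfderiv]
      exact ih.bilinear (ContinuousLinearMap.lsmul ℝ 𝕜) (hg m ih) sf sg hL₀

section LogarithmicDerivative

variable {𝕜 : Type*} [NontriviallyNormedField 𝕜] [NormedAlgebra ℝ 𝕜] {w : ι → E → 𝕜}

theorem inv (sw : ∀ i, ContDiff ℝ (⊤ : ℕ∞) (w i)) (hw : ∀ i q, w i q ≠ 0)
    (hdw : DerivBounds (fun i => fderiv ℝ (w i)) p (fun i => L i * ‖w i (p i)‖) L) :
    DerivBounds (fun i q => (w i q)⁻¹) p (fun i => ‖w i (p i)‖⁻¹) L := by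
  have sinv : ∀ i, ContDiff ℝ (⊤ : ℕ∞) (fun q => (w i q)⁻¹) := fun i => (sw i).inv (hw i)
  have hfderiv : ∀ i q,
      fderiv ℝ (fun q => (w i q)⁻¹) q = (w i q)⁻¹ • -((w i q)⁻¹ • fderiv ℝ (w i) q) := by
    intro i q
    have hwq := ((sw i).differentiable (by simp) q).hasFDerivAt
    refine ((hasDerivAt_inv (hw i q)).comp_hasFDerivAt_of_eq q hwq rfl).fderiv.trans ?_
    rw [smul_neg, smul_smul, ← mul_inv, ← pow_two]
    exact neg_smul (w i q ^ 2)⁻¹ (fderiv ℝ (w i) q)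
  simp only [← norm_inv]
  refine of_fderiv_eq_smul sinv (fun i => ((sinv i).smul (hdw.contDiff i)).neg) hfderiv hdw.one_le
    fun m hm => ?_
  have hamplitude : (fun i => ‖(w i (p i))⁻¹‖ * (L i * ‖w i (p i)‖)) = L := funext fun i => by
    have hwp : ‖w i (p i)‖ ≠ 0 := norm_ne_zero_iff.2 (hw i _)
    rw [norm_inv]
    field_simp
  have hg := hm.bilinear (-ContinuousLinearMap.lsmul ℝ 𝕜) (hdw.upTo m) sinv hdw.contDiff
    hdw.length_nonneg
  rwa [hamplitude] at hg

theorem inv_smul_fderiv (sw : ∀ i, ContDiff ℝ (⊤ : ℕ∞) (w i)) (hw : ∀ i q, w i q ≠ 0)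
    (hdw : DerivBounds (fun i => fderiv ℝ (w i)) p (fun i => L i * ‖w i (p i)‖) L) :
    DerivBounds (fun i q => (w i q)⁻¹ • fderiv ℝ (w i) q) p L L := by
  refine ((inv sw hw hdw).bilinear (ContinuousLinearMap.lsmul ℝ 𝕜) hdw).mono (K := 1) (fun i => ?_)
    hdw.length_nonneg fun _ => le_rfl
  have hwp : ‖w i (p i)‖ ≠ 0 := norm_ne_zero_iff.2 (hw i _)
  exact le_of_eq (by field_simp)

end LogarithmicDerivative

theorem fderiv_of_le_norm {f : ι → E → F} (hf : DerivBounds f p A (fun _ => 1)) {K : ℝ}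
    (hA : ∀ i, A i ≤ K * (L i * ‖f i (p i)‖)) (hL : ∀ i, 1 ≤ L i) :
    DerivBounds (fun i => fderiv ℝ (f i)) p (fun i => L i * ‖f i (p i)‖) L :=
  hf.fderiv.mono (K := K) (fun i => by simpa using hA i)
    (fun i => mul_nonneg (zero_le_one.trans (hL i)) (norm_nonneg _)) hL

theorem exp_log (b : ℂ →L[ℝ] ℂ) {w : ι → E → ℂ} (sw : ∀ i, ContDiff ℝ (⊤ : ℕ∞) (w i))
    (hw : ∀ i q, w i q ∈ Complex.slitPlane)
    (hdw : DerivBounds (fun i => fderiv ℝ (w i)) p (fun i => L i * ‖w i (p i)‖) L) :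
    DerivBounds (fun i q => Complex.exp (b (Complex.log (w i q)))) p
      (fun i => ‖Complex.exp (b (Complex.log (w i (p i))))‖) L := by
  have hlogderiv :=
    inv_smul_fderiv sw (fun i q => Complex.slitPlane_ne_zero (hw i q)) hdw
  have slog : ∀ i, ContDiff ℝ (⊤ : ℕ∞) fun q => Complex.log (w i q) := fun i =>
    contDiff_iff_contDiffAt.2 fun q =>
      ((Complex.contDiffAt_log (hw i q)).restrict_scalars ℝ).comp q (sw i).contDiffAt
  refine of_fderiv_eq_smul (g := fun i q => b.comp ((w i q)⁻¹ • fderiv ℝ (w i) q))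
    (fun i => (b.contDiff.comp (slog i)).cexp)
    (fun i => contDiff_const.clm_comp (hlogderiv.contDiff i)) (fun i q => ?_) hdw.one_le
    fun m _ => (hlogderiv.clm_apply (ContinuousLinearMap.compL ℝ E ℂ ℂ b)).upTo m
  have hwq := ((sw i).differentiable (by simp) q).hasFDerivAt
  exact (b.hasFDerivAt.comp q
    ((Complex.hasDerivAt_log (hw i q)).comp_hasFDerivAt_of_eq q hwq rfl)).cexp.fderiv

theorem comp_of_hasCompactSupport {φ : F → G} (sφ : ContDiff ℝ (⊤ : ℕ∞) φ)
    (hφ : HasCompactSupport φ) {u : ι → E → F} (hu : DerivBounds u p A L) {K : ℝ}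
    (hK : ∀ i, u i (p i) ∈ tsupport φ → A i ≤ K) :
    DerivBounds (fun i q => φ (u i q)) p (fun _ => 1) L := by
  refine .of_forall_order (fun i => sφ.comp (hu.contDiff i)) (fun _ => zero_le_one) hu.one_le
    fun j => ?_
  obtain ⟨D, hD, hφD⟩ := exists_norm_iteratedFDeriv_le_of_hasCompactSupport sφ hφ j
  obtain ⟨C, hC, h⟩ := hu.upTo j
  refine ⟨j.factorial * D * (max 1 (C * K)) ^ j, fun i => ?_⟩
  have hL := hu.length_nonneg i
  by_cases hi : u i (p i) ∈ tsupport φ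
  · have hu' : ∀ l, 1 ≤ l → l ≤ j →
        ‖iteratedFDeriv ℝ l (u i) (p i)‖ ≤ (max 1 (C * K) * L i) ^ l := fun l hl1 hl => by
      rw [mul_pow]
      calc ‖iteratedFDeriv ℝ l (u i) (p i)‖ ≤ C * A i * L i ^ l := h i l hl
        _ ≤ max 1 (C * K) ^ l * L i ^ l := by
          gcongr
          calc C * A i ≤ C * K := by gcongr; exact hK i hi
            _ ≤ max 1 (C * K) := le_max_right _ _
            _ ≤ max 1 (C * K) ^ l := le_self_pow₀ (le_max_left _ _) (by omega)
    exact (norm_iteratedFDeriv_comp_le sφ (hu.contDiff i) (by exact_mod_cast le_top) (p i)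
      (fun l hl => hφD l hl _) hu').trans_eq (by ring)
  · have hzero : (fun q => φ (u i q)) =ᶠ[nhds (p i)] fun _ => 0 :=
      (hu.contDiff i).continuous.continuousAt.eventually
        (notMem_tsupport_iff_eventuallyEq.1 hi)
    rw [(hzero.iteratedFDeriv (𝕜 := ℝ) j).eq_of_nhds]
    simp only [iteratedFDeriv_fun_zero, Pi.zero_apply, norm_zero]
    positivity

end DerivBounds

end DerivBounds

section PhaseSpace

variable {n : ℕ}

/-- The local model `ℝⁿ × ℝⁿ` of the cotangent bundle, with points `(x', ξ')`. -/
abbrev PhaseSpace (n : ℕ) : Type := EuclideanSpace ℝ (Fin n) × EuclideanSpace ℝ (Fin n)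

theorem one_le_jap (ξ : EuclideanSpace ℝ (Fin n)) : 1 ≤ jap ξ :=
  Real.one_le_sqrt.2 (le_add_of_nonneg_right (sq_nonneg _))

theorem jap_pos (ξ : EuclideanSpace ℝ (Fin n)) : 0 < jap ξ := zero_lt_one.trans_le (one_le_jap ξ)

theorem sq_jap (ξ : EuclideanSpace ℝ (Fin n)) : jap ξ ^ 2 = 1 + ‖ξ‖ ^ 2 :=
  Real.sq_sqrt (by positivity)

theorem norm_le_jap (ξ : EuclideanSpace ℝ (Fin n)) : ‖ξ‖ ≤ jap ξ :=
  Real.le_sqrt_of_sq_le (le_add_of_nonneg_left zero_le_one)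

/-- The dilation `(x', ξ') ↦ (x', l ξ')` of the fibres. For `l = ⟨ξ'⟩` it brings a point back to
fibre distance at most one, which turns symbol estimates into plain derivative bounds. -/
def fiberDilation (l : ℝ) : PhaseSpace n →L[ℝ] PhaseSpace n :=
  (ContinuousLinearMap.fst ℝ _ _).prod (l • ContinuousLinearMap.snd ℝ _ _)

theorem fiberDilation_apply (l : ℝ) (q : PhaseSpace n) : fiberDilation l q = (q.1, l • q.2) := rfl

theorem fiberDilation_fiberDilation_inv {l : ℝ} (hl : l ≠ 0) (q : PhaseSpace n) :
    fiberDilation l (fiberDilation l⁻¹ q) = q := by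
  simp [fiberDilation_apply, smul_smul, mul_inv_cancel₀ hl]

theorem fiberDilation_jap (p : PhaseSpace n) :
    fiberDilation (jap p.2) (fiberDilation (jap p.2)⁻¹ p) = p :=
  fiberDilation_fiberDilation_inv (jap_pos p.2).ne' p

variable {Z F G H : Type*} [NormedAddCommGroup F] [NormedSpace ℝ F] [NormedAddCommGroup G]
  [NormedSpace ℝ G] [NormedAddCommGroup H] [NormedSpace ℝ H]

/-- Near every point `p = (x', ξ')` the functions `a z` have size `A (z, p)` and length scale
`(L (z, p))⁻¹` in `x'`, `⟨ξ'⟩ (L (z, p))⁻¹` in `ξ'`, uniformly in `z` and `p`. -/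
def SymbolBounds (a : Z → PhaseSpace n → F) (A L : Z × PhaseSpace n → ℝ) : Prop :=
  DerivBounds (fun i q => a i.1 (fiberDilation (jap i.2.2) q))
    (fun i => fiberDilation (jap i.2.2)⁻¹ i.2) A L

theorem Dmix_eq_zero_of_eventuallyEq {a : PhaseSpace n → ℂ} {p : PhaseSpace n}
    (ha : a =ᶠ[nhds p] fun _ => 0) (α β : ℕ) (v : Fin α → EuclideanSpace ℝ (Fin n))
    (w : Fin β → EuclideanSpace ℝ (Fin n)) : Dmix n a α β v w p = 0 := by
  rw [Dmix, (ha.iteratedFDeriv (𝕜 := ℝ) (α + β)).eq_of_nhds]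
  simp only [iteratedFDeriv_fun_zero, Pi.zero_apply, zero_apply]

/- Dilating the fibres multiplies the vertical directions by `⟨ξ'⟩⁻¹`. -/
theorem norm_Dmix_le {a : PhaseSpace n → ℂ} (sa : ContDiff ℝ (⊤ : ℕ∞) a) {l : ℝ} (hl : 0 < l)
    {α β : ℕ} {v : Fin α → EuclideanSpace ℝ (Fin n)} {w : Fin β → EuclideanSpace ℝ (Fin n)}
    (hv : ∀ i, ‖v i‖ ≤ 1) (hw : ∀ i, ‖w i‖ ≤ 1) (p : PhaseSpace n) :
    ‖Dmix n a α β v w p‖ ≤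
      ‖iteratedFDeriv ℝ (α + β) (a ∘ fiberDilation l) (fiberDilation l⁻¹ p)‖ * l⁻¹ ^ β := by
  have hundilate : a = (a ∘ fiberDilation l) ∘ fiberDilation l⁻¹ :=
    funext fun q => by simp only [Function.comp_apply, fiberDilation_fiberDilation_inv hl.ne']
  set b := a ∘ fiberDilation l
  rw [Dmix, hundilate, ContinuousLinearMap.iteratedFDeriv_comp_right _
    (sa.comp (fiberDilation l).contDiff) p (by exact_mod_cast le_top),
    ContinuousMultilinearMap.compContinuousLinearMap_apply]
  refine (ContinuousMultilinearMap.le_opNorm _ _).trans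
    (mul_le_mul_of_nonneg_left ?_ (norm_nonneg _))
  rw [Fin.prod_univ_add]
  have hhorizontal : ∏ i : Fin α, ‖fiberDilation l⁻¹ (v i, (0 : EuclideanSpace ℝ (Fin n)))‖ ≤ 1 :=
    Finset.prod_le_one (fun _ _ => norm_nonneg _) fun i _ => by
      simpa [fiberDilation_apply] using hv i
  have hvertical : ∏ i : Fin β, ‖fiberDilation l⁻¹ ((0 : EuclideanSpace ℝ (Fin n)), w i)‖
      ≤ l⁻¹ ^ β := by
    have hle : ∀ i, ‖fiberDilation l⁻¹ ((0 : EuclideanSpace ℝ (Fin n)), w i)‖ ≤ l⁻¹ := fun i => by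
      rw [fiberDilation_apply, Prod.norm_mk, norm_zero, norm_smul, norm_inv,
        Real.norm_of_nonneg hl.le]
      exact max_le (by positivity) (mul_le_of_le_one_right (by positivity) (hw i))
    simpa using Finset.prod_le_prod (s := Finset.univ) (fun _ _ => norm_nonneg _) fun i _ => hle i
  simp only [Fin.append_left, Fin.append_right]
  exact (mul_le_mul hhorizontal hvertical (by positivity) zero_le_one).trans_eq (one_mul _)

namespace SymbolBounds

variable {A B L M : Z × PhaseSpace n → ℝ}

theorem exists_norm_le {a : Z → PhaseSpace n → F} (ha : SymbolBounds a A L) :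
    ∃ C : ℝ, 0 ≤ C ∧ ∀ z p, ‖a z p‖ ≤ C * A (z, p) := by
  obtain ⟨C, hC, h⟩ := DerivBounds.exists_norm_le ha
  refine ⟨C, hC, fun z p => ?_⟩
  simpa only [fiberDilation_jap] using h (z, p)

protected theorem contDiff {a : Z → PhaseSpace n → F} (ha : SymbolBounds a A L) (z : Z) :
    ContDiff ℝ (⊤ : ℕ∞) (a z) := by
  simpa [jap, fiberDilation_apply] using DerivBounds.contDiff ha (z, 0)

theorem exists_norm_Dmix_le {a : Z → PhaseSpace n → ℂ} (ha : SymbolBounds a A L) (α β : ℕ) :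
    ∃ C : ℝ, 0 ≤ C ∧ ∀ z, ∀ (v : Fin α → EuclideanSpace ℝ (Fin n))
      (w : Fin β → EuclideanSpace ℝ (Fin n)), (∀ i, ‖v i‖ ≤ 1) → (∀ i, ‖w i‖ ≤ 1) → ∀ p,
      ‖Dmix n (a z) α β v w p‖ ≤ C * A (z, p) * L (z, p) ^ (α + β) * (jap p.2)⁻¹ ^ β := by
  obtain ⟨C, hC, h⟩ := ha.upTo (α + β)
  refine ⟨C, hC, fun z v w hv hw p => ?_⟩
  have hjap := jap_pos p.2
  exact (norm_Dmix_le (ha.contDiff z) hjap hv hw p).trans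
    (mul_le_mul_of_nonneg_right (h (z, p) (α + β) le_rfl) (by positivity))

theorem congr {a b : Z → PhaseSpace n → F} (ha : SymbolBounds a A L) (hab : ∀ z p, a z p = b z p) :
    SymbolBounds b A L := by
  rwa [← (funext fun z => funext (hab z) : a = b)]

theorem mono {a : Z → PhaseSpace n → F} (ha : SymbolBounds a A L) {K : ℝ}
    (hAB : ∀ i, A i ≤ K * B i) (hB : ∀ i, 0 ≤ B i) (hLM : ∀ i, L i ≤ M i) : SymbolBounds a B M :=
  DerivBounds.mono ha hAB hB hLM

theorem const {c : Z → F} {K : ℝ} (hc : ∀ z, ‖c z‖ ≤ K) :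
    SymbolBounds (fun z (_ : PhaseSpace n) => c z) (fun _ => 1) (fun _ => 1) :=
  DerivBounds.const (K := K) (fun i => by simpa using hc i.1) (fun _ => zero_le_one)
    fun _ => le_rfl

theorem add {a b : Z → PhaseSpace n → F} (ha : SymbolBounds a A L) (hb : SymbolBounds b A L) :
    SymbolBounds (fun z p => a z p + b z p) A L :=
  DerivBounds.add ha hb

theorem bilinear (b : F →L[ℝ] G →L[ℝ] H) {f : Z → PhaseSpace n → F} {g : Z → PhaseSpace n → G}
    (hf : SymbolBounds f A L) (hg : SymbolBounds g B L) :
    SymbolBounds (fun z p => b (f z p) (g z p)) (fun i => A i * B i) L :=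
  DerivBounds.bilinear b hf hg

theorem clm_apply (b : F →L[ℝ] G) {f : Z → PhaseSpace n → F} (hf : SymbolBounds f A L) :
    SymbolBounds (fun z p => b (f z p)) A L :=
  DerivBounds.clm_apply b hf

theorem comp_fst {f : EuclideanSpace ℝ (Fin n) → F} (hf : BoundedSmooth f) :
    SymbolBounds (fun (_ : Z) p => f p.1) (fun _ => 1) (fun _ => 1) := by
  refine .of_forall_order (fun _ => hf.contDiff.comp
    (contDiff_fst.comp (fiberDilation (n := n) _).contDiff)) (fun _ => zero_le_one)
    (fun _ => le_rfl) fun j => ?_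
  obtain ⟨C, hC⟩ := hf.bounded j
  refine ⟨C, fun i => ?_⟩
  set T := ContinuousLinearMap.fst ℝ (EuclideanSpace ℝ (Fin n)) (EuclideanSpace ℝ (Fin n))
  change ‖iteratedFDeriv ℝ j (f ∘ T) _‖ ≤ C * 1 * 1 ^ j
  rw [T.iteratedFDeriv_comp_right hf.contDiff _ (by exact_mod_cast le_top), one_pow, mul_one,
    mul_one]
  refine (ContinuousMultilinearMap.norm_compContinuousLinearMap_le _ _).trans
    ((mul_le_of_le_one_right (norm_nonneg _) ?_).trans (hC _))
  exact Finset.prod_le_one (fun _ _ => norm_nonneg _) fun _ _ =>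
    ContinuousLinearMap.norm_fst_le ..

theorem snd : SymbolBounds (fun (_ : Z) (p : PhaseSpace n) => p.2) (fun i => jap i.2.2)
    (fun _ => 1) := by
  refine .continuousLinearMap (T := fun i : Z × PhaseSpace n => jap i.2.2 •
    ContinuousLinearMap.snd ℝ (EuclideanSpace ℝ (Fin n)) (EuclideanSpace ℝ (Fin n)))
    (fun i => ?_) (fun i => ?_) fun _ => le_rfl
  · rw [norm_smul, Real.norm_of_nonneg (jap_pos _).le]
    exact mul_le_of_le_one_right (jap_pos _).le (ContinuousLinearMap.norm_snd_le ..)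
  · have := (jap_pos i.2.2).ne'
    simpa [fiberDilation_apply, smul_smul, this] using norm_le_jap i.2.2

theorem inv {𝕜 : Type*} [NontriviallyNormedField 𝕜] [NormedAlgebra ℝ 𝕜] {a : Z → PhaseSpace n → 𝕜}
    (ha : SymbolBounds a A (fun _ => 1)) (hne : ∀ z p, a z p ≠ 0) {K : ℝ}
    (hA : ∀ i, A i ≤ K * (L i * ‖a i.1 i.2‖)) (hL : ∀ i, 1 ≤ L i) :
    SymbolBounds (fun z p => (a z p)⁻¹) (fun i => ‖a i.1 i.2‖⁻¹) L := by
  have := DerivBounds.inv (DerivBounds.contDiff ha) (fun i q => hne _ _)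
    (DerivBounds.fderiv_of_le_norm (K := K) ha (by simpa only [fiberDilation_jap] using hA) hL)
  simpa only [SymbolBounds, fiberDilation_jap] using this

theorem exp_log (b : ℂ →L[ℝ] ℂ) {a : Z → PhaseSpace n → ℂ} (ha : SymbolBounds a A (fun _ => 1))
    (hslit : ∀ z p, a z p ∈ Complex.slitPlane) {K : ℝ}
    (hA : ∀ i, A i ≤ K * (L i * ‖a i.1 i.2‖)) (hL : ∀ i, 1 ≤ L i) :
    SymbolBounds (fun z p => Complex.exp (b (Complex.log (a z p))))
      (fun i => ‖Complex.exp (b (Complex.log (a i.1 i.2)))‖) L := by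
  have := DerivBounds.exp_log b (DerivBounds.contDiff ha) (fun i q => hslit _ _)
    (DerivBounds.fderiv_of_le_norm (K := K) ha (by simpa only [fiberDilation_jap] using hA) hL)
  simpa only [SymbolBounds, fiberDilation_jap] using this

end SymbolBounds

section Coefficients

variable {R₀ : EuclideanSpace ℝ (Fin n) →
    (EuclideanSpace ℝ (Fin n) →L[ℝ] EuclideanSpace ℝ (Fin n))}
  {n₀ : EuclideanSpace ℝ (Fin n) → ℝ}

theorem symbolBounds_rZero (hR₀ : BoundedSmooth R₀) :
    SymbolBounds (fun (_ : Z) p => rZero n R₀ p) (fun i => jap i.2.2 ^ 2) (fun _ => 1) := by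
  have hcovector := (SymbolBounds.comp_fst (Z := Z) hR₀).bilinear (.id ℝ _) SymbolBounds.snd
  refine ((hcovector.bilinear (innerSL ℝ) SymbolBounds.snd).mono (K := 1) (fun i => ?_)
    (fun _ => sq_nonneg _) fun _ => le_rfl).congr fun _ _ => rfl
  rw [one_mul, one_mul, pow_two]

/-- The symbol `r₀ - z n₀ = -ρ²`. For `z ∈ Z₁ ∪ Z₂ ∪ Z₃` it avoids `(-∞, 0]`, the cut of the
logarithm. -/
def negRhoSq (R₀ : EuclideanSpace ℝ (Fin n) →
      (EuclideanSpace ℝ (Fin n) →L[ℝ] EuclideanSpace ℝ (Fin n)))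
    (n₀ : EuclideanSpace ℝ (Fin n) → ℝ) (z : ℂ) (p : PhaseSpace n) : ℂ :=
  (rZero n R₀ p : ℂ) - z * (n₀ p.1 : ℂ)

theorem symbolBounds_negRhoSq (hR₀ : BoundedSmooth R₀) (hn₀ : BoundedSmooth n₀) {ζ : Z → ℂ}
    {K : ℝ} (hζ : ∀ i, ‖ζ i‖ ≤ K) :
    SymbolBounds (fun i p => negRhoSq R₀ n₀ (ζ i) p) (fun i => jap i.2.2 ^ 2) (fun _ => 1) := by
  have hr₀ := (symbolBounds_rZero (Z := Z) hR₀).clm_apply Complex.ofRealCLM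
  have hzn₀ := (SymbolBounds.const (n := n) hζ).bilinear (-ContinuousLinearMap.mul ℝ ℂ)
    ((SymbolBounds.comp_fst (Z := Z) hn₀).clm_apply Complex.ofRealCLM)
  have hone_le : ∀ i : Z × PhaseSpace n, (1 : ℝ) * 1 ≤ 1 * jap i.2.2 ^ 2 := fun i => by
    simpa using one_le_pow₀ (one_le_jap i.2.2) (n := 2)
  exact (hr₀.add (hzn₀.mono hone_le (fun _ => sq_nonneg _) fun _ => le_rfl)).congr fun i p =>
    (sub_eq_add_neg _ _).symm

/-- Coefficients of the model: `R₀` and `n₀` are in `C_b^∞`, the form `⟨R₀ ξ', ξ'⟩` is uniformly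
elliptic and `n₀` is bounded below by a positive constant. -/
structure AdmissibleCoeffs (R₀ : EuclideanSpace ℝ (Fin n) →
      (EuclideanSpace ℝ (Fin n) →L[ℝ] EuclideanSpace ℝ (Fin n)))
    (n₀ : EuclideanSpace ℝ (Fin n) → ℝ) : Prop where
  boundedSmooth_R₀ : BoundedSmooth R₀
  boundedSmooth_n₀ : BoundedSmooth n₀
  elliptic : ∃ c : ℝ, 0 < c ∧ ∀ x ξ, c * ‖ξ‖ ^ 2 ≤ (inner ℝ (R₀ x ξ) ξ : ℝ)
  exists_pos_le_n₀ : ∃ c : ℝ, 0 < c ∧ ∀ x, c ≤ n₀ x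

/-- The argument `(1 - r_♯) / δ` of the glancing cutoff, where `r_♯ = r₀ / n₀`. -/
def glancingArg (R₀ : EuclideanSpace ℝ (Fin n) →
      (EuclideanSpace ℝ (Fin n) →L[ℝ] EuclideanSpace ℝ (Fin n)))
    (n₀ : EuclideanSpace ℝ (Fin n) → ℝ) (δ : ℝ) (p : PhaseSpace n) : ℝ :=
  (1 - rZero n R₀ p / n₀ p.1) / δ

theorem norm_rho_sq (z : ℂ) (p : PhaseSpace n) :
    ‖rho n R₀ n₀ z p‖ ^ 2 = ‖negRhoSq R₀ n₀ z p‖ := by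
  rw [← norm_pow, rho, sq_ssqrt, negRhoSq, ← norm_neg, neg_add, neg_neg, sub_eq_add_neg]

theorem sqrt_le_norm_rho {c : ℝ} {z : ℂ} {p : PhaseSpace n} (h : c ≤ ‖negRhoSq R₀ n₀ z p‖) :
    √c ≤ ‖rho n R₀ n₀ z p‖ :=
  Real.sqrt_le_iff.2 ⟨norm_nonneg _, h.trans_eq (norm_rho_sq z p).symm⟩

theorem negRhoSq_re (z : ℂ) (p : PhaseSpace n) :
    (negRhoSq R₀ n₀ z p).re = rZero n R₀ p - z.re * n₀ p.1 := by
  simp [negRhoSq]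

theorem negRhoSq_im (z : ℂ) (p : PhaseSpace n) :
    (negRhoSq R₀ n₀ z p).im = -(z.im * n₀ p.1) := by
  simp [negRhoSq]

theorem abs_re_le_one_and_abs_im_le_one_of_Zall {z : ℂ} (hz : Zall z) :
    |z.re| ≤ 1 ∧ |z.im| ≤ 1 := by
  rcases hz with ⟨hre, -, him⟩ | ⟨hre, him⟩ | ⟨hre, him⟩
  · exact ⟨by simp [hre], him⟩
  · exact ⟨by simp [hre], him⟩
  · exact ⟨hre, him.le⟩

theorem norm_le_two_of_Zall {z : ℂ} (hz : Zall z) : ‖z‖ ≤ 2 := by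
  have := abs_re_le_one_and_abs_im_le_one_of_Zall hz
  linarith [Complex.norm_le_abs_re_add_abs_im z]

theorem abs_im_mul_le_norm_negRhoSq (z : ℂ) (p : PhaseSpace n) :
    |z.im| * n₀ p.1 ≤ ‖negRhoSq R₀ n₀ z p‖ := by
  have := Complex.abs_im_le_norm (negRhoSq R₀ n₀ z p)
  rw [negRhoSq_im, abs_neg, abs_mul] at this
  exact (mul_le_mul_of_nonneg_left (le_abs_self _) (abs_nonneg _)).trans this

namespace AdmissibleCoeffs

variable (hc : AdmissibleCoeffs R₀ n₀)
include hc

theorem n₀_pos (x : EuclideanSpace ℝ (Fin n)) : 0 < n₀ x := by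
  obtain ⟨c, hc₀, hle⟩ := hc.exists_pos_le_n₀
  exact hc₀.trans_le (hle x)

theorem rZero_nonneg (p : PhaseSpace n) : 0 ≤ rZero n R₀ p := by
  obtain ⟨c, hc₀, hle⟩ := hc.elliptic
  exact (by positivity : (0 : ℝ) ≤ c * ‖p.2‖ ^ 2).trans (hle p.1 p.2)

theorem exists_n₀_le : ∃ D : ℝ, 0 ≤ D ∧ ∀ x, n₀ x ≤ D := by
  obtain ⟨D, hD⟩ := hc.boundedSmooth_n₀.bounded 0
  simp only [norm_iteratedFDeriv_zero] at hD
  exact ⟨D, (norm_nonneg _).trans (hD 0), fun x => (le_abs_self _).trans (hD x)⟩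

theorem exists_sq_jap_le :
    ∃ K : ℝ, 0 ≤ K ∧ ∀ p : PhaseSpace n, jap p.2 ^ 2 ≤ K * (1 + rZero n R₀ p) := by
  obtain ⟨c, hc₀, hle⟩ := hc.elliptic
  refine ⟨1 + c⁻¹, by positivity, fun p => ?_⟩
  have hr : ‖p.2‖ ^ 2 ≤ c⁻¹ * rZero n R₀ p := (le_inv_mul_iff₀ hc₀).2 (hle p.1 p.2)
  have := hc.rZero_nonneg p
  have : 0 ≤ c⁻¹ := by positivity
  rw [sq_jap]
  linarith

theorem negRhoSq_mem_slitPlane {z : ℂ} (hz : Zall z) (p : PhaseSpace n) :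
    negRhoSq R₀ n₀ z p ∈ Complex.slitPlane := by
  rw [Complex.mem_slitPlane_iff, negRhoSq_re, negRhoSq_im]
  have hn₀ := hc.n₀_pos p.1
  by_cases him : z.im = 0
  · left
    have hre : z.re = -1 := by simpa [Zall, him] using hz
    rw [hre]
    linarith [hc.rZero_nonneg p]
  · exact Or.inr (neg_ne_zero.2 (mul_ne_zero him hn₀.ne'))

theorem exists_mul_sqrt_abs_im_le_norm_rho : ∃ c : ℝ, 0 < c ∧ ∀ (z : ℂ) (p : PhaseSpace n),
    c * √|z.im| ≤ ‖rho n R₀ n₀ z p‖ := by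
  obtain ⟨c, hc₀, hle⟩ := hc.exists_pos_le_n₀
  refine ⟨√c, Real.sqrt_pos.2 hc₀, fun z p => ?_⟩
  rw [← Real.sqrt_mul hc₀.le, mul_comm]
  exact sqrt_le_norm_rho ((mul_le_mul_of_nonneg_left (hle p.1) (abs_nonneg _)).trans
    (abs_im_mul_le_norm_negRhoSq z p))

theorem exists_le_norm_rho_of_Ztwothree : ∃ c : ℝ, 0 < c ∧ ∀ z, Ztwothree z →
    ∀ p : PhaseSpace n, c ≤ ‖rho n R₀ n₀ z p‖ := by
  obtain ⟨c, hc₀, hle⟩ := hc.exists_pos_le_n₀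
  refine ⟨√c, Real.sqrt_pos.2 hc₀, fun z hz p => sqrt_le_norm_rho ((hle p.1).trans ?_)⟩
  rcases hz with ⟨hre, -⟩ | ⟨-, him⟩
  · have := Complex.re_le_norm (negRhoSq R₀ n₀ z p)
    rw [negRhoSq_re, hre] at this
    linarith [hc.rZero_nonneg p]
  · simpa [him] using abs_im_mul_le_norm_negRhoSq (R₀ := R₀) (n₀ := n₀) z p

theorem exists_le_norm_rho_of_one_le_glancingArg {δ : ℝ} (hδ : 0 < δ) :
    ∃ c : ℝ, 0 < c ∧ ∀ z, Zall z → ∀ p : PhaseSpace n, 1 ≤ |glancingArg R₀ n₀ δ p| →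
      c ≤ ‖rho n R₀ n₀ z p‖ := by
  obtain ⟨c, hc₀, hle⟩ := hc.exists_pos_le_n₀
  obtain ⟨c', hc'₀, hle'⟩ := hc.exists_le_norm_rho_of_Ztwothree
  refine ⟨min √(c * δ) c', lt_min (Real.sqrt_pos.2 (by positivity)) hc'₀, fun z hz p hp => ?_⟩
  rcases hz with ⟨hre, -⟩ | hz
  · refine (min_le_left _ _).trans (sqrt_le_norm_rho ?_)
    have hn₀ := hc.n₀_pos p.1
    have hdist : |(negRhoSq R₀ n₀ z p).re| = n₀ p.1 * δ * |glancingArg R₀ n₀ δ p| := by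
      rw [negRhoSq_re, hre, one_mul, abs_sub_comm, glancingArg, abs_div, abs_of_pos hδ, mul_assoc,
        mul_div_cancel₀ _ hδ.ne', ← abs_of_pos hn₀, ← abs_mul, abs_of_pos hn₀, mul_sub, mul_one,
        mul_div_cancel₀ _ hn₀.ne']
    calc c * δ ≤ n₀ p.1 * δ := mul_le_mul_of_nonneg_right (hle _) hδ.le
      _ ≤ n₀ p.1 * δ * |glancingArg R₀ n₀ δ p| := le_mul_of_one_le_right (by positivity) hp
      _ ≤ ‖negRhoSq R₀ n₀ z p‖ := hdist ▸ Complex.abs_re_le_norm _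
  · exact (min_le_right _ _).trans (hle' z hz p)

theorem exists_sq_jap_le_of_abs_glancingArg_le {δ : ℝ} (hδ : 0 < δ) {B : ℝ} :
    ∃ K : ℝ, 0 ≤ K ∧ ∀ p : PhaseSpace n, |glancingArg R₀ n₀ δ p| ≤ B → jap p.2 ^ 2 ≤ K := by
  obtain ⟨K, hK, hjap⟩ := hc.exists_sq_jap_le
  obtain ⟨D, hD, hn₀⟩ := hc.exists_n₀_le
  refine ⟨K * (1 + (1 + |B| * δ) * D), by positivity, fun p hp => (hjap p).trans ?_⟩
  have hratio : rZero n R₀ p / n₀ p.1 ≤ 1 + |B| * δ := by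
    have h := (neg_le_abs (glancingArg R₀ n₀ δ p)).trans (hp.trans (le_abs_self B))
    rw [glancingArg, ← neg_div, div_le_iff₀ hδ] at h
    linarith
  rw [div_le_iff₀ (hc.n₀_pos p.1)] at hratio
  have : (1 + |B| * δ) * n₀ p.1 ≤ (1 + |B| * δ) * D := by gcongr; exact hn₀ _
  gcongr
  linarith

theorem exists_jap_le_of_le_norm_rho {c : ℝ} (hc₀ : 0 < c) :
    ∃ K : ℝ, 0 ≤ K ∧ ∀ z, Zall z → ∀ p : PhaseSpace n, ∀ σ, 0 < σ → σ ≤ 1 →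
      c * σ ≤ ‖rho n R₀ n₀ z p‖ → jap p.2 ≤ K * σ⁻¹ * ‖rho n R₀ n₀ z p‖ := by
  obtain ⟨K, hK, hjap⟩ := hc.exists_sq_jap_le
  obtain ⟨D, hD, hn₀⟩ := hc.exists_n₀_le
  refine ⟨√(K * ((1 + D) * (c⁻¹) ^ 2 + 1)), Real.sqrt_nonneg _, fun z hz p σ hσ hσ1 hρ => ?_⟩
  set r := ‖rho n R₀ n₀ z p‖
  have hr : 1 ≤ c⁻¹ * σ⁻¹ * r := by
    rw [← mul_inv, le_inv_mul_iff₀ (by positivity), mul_one]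
    exact hρ
  have hσr : r ≤ σ⁻¹ * r := le_mul_of_one_le_left (norm_nonneg _) ((one_le_inv₀ hσ).2 hσ1)
  have hr₀ : rZero n R₀ p ≤ r ^ 2 + D := by
    have hre := Complex.re_le_norm (negRhoSq R₀ n₀ z p)
    rw [negRhoSq_re, ← norm_rho_sq] at hre
    have : z.re * n₀ p.1 ≤ 1 * n₀ p.1 := mul_le_mul_of_nonneg_right
      (abs_le.1 (abs_re_le_one_and_abs_im_le_one_of_Zall hz).1).2 (hc.n₀_pos p.1).le
    linarith [hn₀ p.1]
  refine abs_le_of_sq_le_sq' ?_ (by positivity) |>.2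
  calc jap p.2 ^ 2 ≤ K * (1 + rZero n R₀ p) := hjap p
    _ ≤ K * ((1 + D) * 1 ^ 2 + r ^ 2) := mul_le_mul_of_nonneg_left (by linarith) hK
    _ ≤ K * ((1 + D) * (c⁻¹ * σ⁻¹ * r) ^ 2 + (σ⁻¹ * r) ^ 2) := by gcongr
    _ = K * ((1 + D) * (c⁻¹) ^ 2 + 1) * (σ⁻¹ * r) ^ 2 := by ring
    _ = (√(K * ((1 + D) * (c⁻¹) ^ 2 + 1)) * σ⁻¹ * r) ^ 2 := by
      rw [mul_assoc √_, mul_pow √_, Real.sq_sqrt (by positivity)]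

theorem symbolBounds_glancingArg {δ : ℝ} :
    SymbolBounds (fun (_ : Z) p => glancingArg R₀ n₀ δ p) (fun i => jap i.2.2 ^ 2)
      (fun _ => 1) := by
  obtain ⟨c, hc₀, hle⟩ := hc.exists_pos_le_n₀
  have hinv : SymbolBounds (fun (_ : Z) (p : PhaseSpace n) => (n₀ p.1)⁻¹) (fun _ => 1)
      (fun _ => 1) := by
    refine ((SymbolBounds.comp_fst hc.boundedSmooth_n₀).inv (K := c⁻¹)
      (fun _ p => (hc.n₀_pos p.1).ne') (fun i => ?_) fun _ => le_rfl).mono (K := c⁻¹)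
      (fun i => ?_) (fun _ => zero_le_one) fun _ => le_rfl
    all_goals rw [Real.norm_of_nonneg (hc.n₀_pos _).le]
    · rw [one_mul, le_inv_mul_iff₀ hc₀, mul_one]
      exact hle _
    · rw [mul_one]
      exact inv_anti₀ hc₀ (hle _)
  have hratio := ((symbolBounds_rZero (Z := Z) hc.boundedSmooth_R₀).bilinear
    (ContinuousLinearMap.mul ℝ ℝ) hinv).clm_apply (-δ⁻¹ • ContinuousLinearMap.id ℝ ℝ)
  have hone : SymbolBounds (fun (_ : Z) (_ : PhaseSpace n) => δ⁻¹) (fun i => jap i.2.2 ^ 2)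
      (fun _ => 1) :=
    (SymbolBounds.const (K := ‖δ⁻¹‖) fun _ => le_rfl).mono (K := 1)
      (fun i => by simpa using one_le_pow₀ (one_le_jap i.2.2) (n := 2))
      (fun _ => sq_nonneg _) fun _ => le_rfl
  refine (hone.add (hratio.mono (K := 1) (fun i => ?_) (fun _ => sq_nonneg _)
    fun _ => le_rfl)).congr fun _ p => ?_
  · rw [mul_one, one_mul]
  · change δ⁻¹ + -δ⁻¹ * (rZero n R₀ p * (n₀ p.1)⁻¹) = glancingArg R₀ n₀ δ p
    rw [glancingArg]
    ring

theorem continuous_glancingArg {δ : ℝ} : Continuous (glancingArg R₀ n₀ δ) :=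
  (hc.symbolBounds_glancingArg.contDiff ()).continuous

theorem symbolBounds_cutoff {δ : ℝ} (hδ : 0 < δ) {φ : ℝ → ℝ} (sφ : ContDiff ℝ (⊤ : ℕ∞) φ)
    (hφ : HasCompactSupport φ) :
    SymbolBounds (fun (_ : Z) p => (φ (glancingArg R₀ n₀ δ p) : ℂ)) (fun _ => 1) (fun _ => 1) := by
  obtain ⟨B, hB⟩ := hφ.isCompact.isBounded.subset_closedBall 0
  obtain ⟨K, -, hK⟩ := hc.exists_sq_jap_le_of_abs_glancingArg_le hδ (B := B)
  have hcomp : SymbolBounds (fun (_ : Z) p => φ (glancingArg R₀ n₀ δ p)) (fun _ => 1)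
      (fun _ => 1) :=
    DerivBounds.comp_of_hasCompactSupport sφ hφ hc.symbolBounds_glancingArg (K := K)
      fun i hi => hK _ <| by
        rw [fiberDilation_jap] at hi
        simpa using hB hi
  exact hcomp.clm_apply Complex.ofRealCLM

end AdmissibleCoeffs

/-- The inverse length scale of `ρ`, in units in which `ξ'` varies by `⟨ξ'⟩`: the logarithmic
derivative of `ρ² = -(r₀ - z n₀)` is `O(⟨ξ'⟩² / |ρ|²)`. -/
def rhoScale (R₀ : EuclideanSpace ℝ (Fin n) →
      (EuclideanSpace ℝ (Fin n) →L[ℝ] EuclideanSpace ℝ (Fin n)))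
    (n₀ : EuclideanSpace ℝ (Fin n) → ℝ) (z : ℂ) (p : PhaseSpace n) : ℝ :=
  1 + (jap p.2 / ‖rho n R₀ n₀ z p‖) ^ 2

/-- The size `|ρ|^k` and inverse length scale `rhoScale` of the `k`-th powers of `ρ` and `|ρ|`. -/
def RhoPowerBounds (R₀ : EuclideanSpace ℝ (Fin n) →
      (EuclideanSpace ℝ (Fin n) →L[ℝ] EuclideanSpace ℝ (Fin n)))
    (n₀ : EuclideanSpace ℝ (Fin n) → ℝ) (k : ℤ) (f : ℂ → PhaseSpace n → ℂ) : Prop :=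
  SymbolBounds (fun z : {z // Zall z} => f z) (fun i => ‖rho n R₀ n₀ i.1 i.2‖ ^ k)
    (fun i => rhoScale R₀ n₀ i.1 i.2)

namespace AdmissibleCoeffs

variable (hc : AdmissibleCoeffs R₀ n₀)
include hc

theorem rho_eq_I_mul_exp {z : ℂ} (hz : Zall z) (p : PhaseSpace n) :
    rho n R₀ n₀ z p = Complex.I * Complex.exp (Complex.log (negRhoSq R₀ n₀ z p) / 2) := by
  rw [← ssqrt_neg (hc.negRhoSq_mem_slitPlane hz p), rho, negRhoSq, neg_sub, neg_add_eq_sub]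

theorem norm_rho_pos {z : ℂ} (hz : Zall z) (p : PhaseSpace n) : 0 < ‖rho n R₀ n₀ z p‖ := by
  rw [norm_pos_iff, hc.rho_eq_I_mul_exp hz]
  exact mul_ne_zero Complex.I_ne_zero (Complex.exp_ne_zero _)

theorem symbolBounds_exp_log_negRhoSq (b : ℂ →L[ℝ] ℂ) :
    SymbolBounds (fun (z : {z // Zall z}) p => Complex.exp (b (Complex.log (negRhoSq R₀ n₀ z p))))
      (fun i => ‖Complex.exp (b (Complex.log (negRhoSq R₀ n₀ i.1 i.2)))‖)
      (fun i => rhoScale R₀ n₀ i.1 i.2) := by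
  refine SymbolBounds.exp_log b (K := 1) (symbolBounds_negRhoSq hc.boundedSmooth_R₀
    hc.boundedSmooth_n₀ fun z => norm_le_two_of_Zall z.2)
    (fun z => hc.negRhoSq_mem_slitPlane z.2) (fun i => ?_)
    fun i => le_add_of_nonneg_right (sq_nonneg _)
  have hρ := hc.norm_rho_pos i.1.2 i.2
  rw [← norm_rho_sq, rhoScale, div_pow, one_mul, add_mul, div_mul_cancel₀ _ (by positivity)]
  exact le_add_of_nonneg_left (by positivity)

theorem rhoPowerBounds_zpow (k : ℤ) :
    RhoPowerBounds R₀ n₀ k fun z p => rho n R₀ n₀ z p ^ k := by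
  have hpow : ∀ (z : {z // Zall z}) p, rho n R₀ n₀ z p ^ k = Complex.I ^ k *
      Complex.exp (((k : ℂ) / 2) • Complex.log (negRhoSq R₀ n₀ z p)) := fun z p => by
    rw [hc.rho_eq_I_mul_exp z.2, mul_zpow, ← Complex.exp_int_mul, smul_eq_mul, mul_comm_div,
      ← mul_div_assoc, mul_div_assoc]
  have hnorm : ∀ (z : {z // Zall z}) p, ‖rho n R₀ n₀ z p‖ ^ k =
      ‖Complex.exp (((k : ℂ) / 2) • Complex.log (negRhoSq R₀ n₀ z p))‖ := fun z p => by
    rw [← norm_zpow, hpow, norm_mul, norm_zpow, Complex.norm_I, one_zpow, one_mul]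
  simp only [RhoPowerBounds, hnorm, hpow]
  exact (hc.symbolBounds_exp_log_negRhoSq (((k : ℂ) / 2) • .id ℝ ℂ)).clm_apply
    (ContinuousLinearMap.mul ℝ ℂ (Complex.I ^ k))

theorem rhoPowerBounds_norm_zpow (k : ℤ) :
    RhoPowerBounds R₀ n₀ k fun z p => (‖rho n R₀ n₀ z p‖ : ℂ) ^ k := by
  have hpow : ∀ (z : {z // Zall z}) p, (‖rho n R₀ n₀ z p‖ : ℂ) ^ k =
      Complex.exp (((k : ℂ) / 2) • ((Complex.log (negRhoSq R₀ n₀ z p)).re : ℂ)) := fun z p => by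
    have hre : (Complex.log (negRhoSq R₀ n₀ z p) / 2).re =
      (Complex.log (negRhoSq R₀ n₀ z p)).re / 2 := Complex.div_ofNat_re _ 2
    rw [hc.rho_eq_I_mul_exp z.2, norm_mul, Complex.norm_I, one_mul, Complex.norm_exp, hre,
      Complex.ofReal_exp, ← Complex.exp_int_mul, smul_eq_mul]
    push_cast
    ring_nf
  have hnorm : ∀ (z : {z // Zall z}) p, ‖rho n R₀ n₀ z p‖ ^ k =
      ‖Complex.exp (((k : ℂ) / 2) • ((Complex.log (negRhoSq R₀ n₀ z p)).re : ℂ))‖ := fun z p => by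
    rw [← hpow, norm_zpow, Complex.norm_real, norm_norm]
  simp only [RhoPowerBounds, hnorm, hpow]
  exact hc.symbolBounds_exp_log_negRhoSq
    (((k : ℂ) / 2) • Complex.ofRealCLM.comp Complex.reCLM)

theorem exists_norm_rho_le : ∃ κ : ℝ, 0 ≤ κ ∧ ∀ z, Zall z → ∀ p : PhaseSpace n,
    ‖rho n R₀ n₀ z p‖ ≤ κ * jap p.2 := by
  obtain ⟨C, hC, h⟩ := (symbolBounds_negRhoSq hc.boundedSmooth_R₀ hc.boundedSmooth_n₀
    fun z : {z // Zall z} => norm_le_two_of_Zall z.2).exists_norm_le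
  refine ⟨√C, Real.sqrt_nonneg C, fun z hz p => ?_⟩
  rw [← Real.sqrt_sq (norm_nonneg _), norm_rho_sq, ← Real.sqrt_sq (jap_pos p.2).le,
    ← Real.sqrt_mul hC]
  exact Real.sqrt_le_sqrt (h ⟨z, hz⟩ p)

end AdmissibleCoeffs

theorem rhoScale_le {K σ : ℝ} (hσ : 0 < σ) (hσ1 : σ ≤ 1) {z : ℂ} {p : PhaseSpace n}
    (hρ : 0 < ‖rho n R₀ n₀ z p‖) (hjap : jap p.2 ≤ K * σ⁻¹ * ‖rho n R₀ n₀ z p‖) :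
    rhoScale R₀ n₀ z p ≤ (1 + K ^ 2) * σ⁻¹ ^ 2 := by
  have hratio : (jap p.2 / ‖rho n R₀ n₀ z p‖) ^ 2 ≤ (K * σ⁻¹) ^ 2 :=
    pow_le_pow_left₀ (div_nonneg (jap_pos _).le hρ.le) ((div_le_iff₀ hρ).2 hjap) 2
  have hone : 1 ≤ σ⁻¹ ^ 2 := one_le_pow₀ ((one_le_inv₀ hσ).2 hσ1)
  rw [rhoScale, add_mul, one_mul, ← mul_pow]
  exact add_le_add hone hratio

namespace RhoPowerBounds

variable (hc : AdmissibleCoeffs R₀ n₀) {k : ℤ} {f : ℂ → PhaseSpace n → ℂ}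
  (hf : RhoPowerBounds R₀ n₀ k f)
include hc hf

/- Each derivative of `f` costs at most `⟨ξ'⟩² / |ρ|² = O(σ⁻²)`, and `|ρ|^k` itself at most
`σ⁻¹ ^ k₋`. -/
theorem exists_norm_Dmix_mul_le {ψ : PhaseSpace n → ℂ}
    (hψ : SymbolBounds (fun _ : {z // Zall z} => ψ) (fun _ => 1) (fun _ => 1)) {c : ℝ}
    (hc₀ : 0 < c) (α β : ℕ) : ∃ C : ℝ, 0 ≤ C ∧ ∀ z, Zall z →
      ∀ (v : Fin α → EuclideanSpace ℝ (Fin n)) (w : Fin β → EuclideanSpace ℝ (Fin n)),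
        (∀ i, ‖v i‖ ≤ 1) → (∀ i, ‖w i‖ ≤ 1) → ∀ p, ∀ σ, 0 < σ → σ ≤ 1 →
        c * σ ≤ ‖rho n R₀ n₀ z p‖ →
        ‖Dmix n (fun q => ψ q * f z q) α β v w p‖ ≤
          C * (σ⁻¹ ^ kminus k * σ⁻¹ ^ (2 * (α + β))) * jap p.2 ^ ((k : ℝ) - β) := by
  have hψf := (hψ.mono (K := 1) (by simp) (fun _ => zero_le_one) hf.one_le).bilinear
    (ContinuousLinearMap.mul ℝ ℂ) hf
  obtain ⟨C, hC, hDmix⟩ := hψf.exists_norm_Dmix_le α β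
  obtain ⟨κ, hκ, hupper⟩ := hc.exists_norm_rho_le
  obtain ⟨K, -, hlower⟩ := hc.exists_jap_le_of_le_norm_rho hc₀
  set M := max κ K
  have : 0 ≤ M := hκ.trans (le_max_left _ _)
  refine ⟨C * M ^ |k| * (1 + M ^ 2) ^ (α + β), by positivity,
    fun z hz v w hv hw p σ hσ hσ1 hρσ => (hDmix ⟨z, hz⟩ v w hv hw p).trans ?_⟩
  have hjap := jap_pos p.2
  have hρ := hc.norm_rho_pos hz p
  have hσρ : jap p.2 ≤ M * σ⁻¹ * ‖rho n R₀ n₀ z p‖ :=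
    (hlower z hz p σ hσ hσ1 hρσ).trans (by gcongr; exact le_max_right _ _)
  have hamplitude : ‖rho n R₀ n₀ z p‖ ^ k ≤ M ^ |k| * σ⁻¹ ^ kminus k * jap p.2 ^ k :=
    zpow_le_of_comparable hρ hjap
      ((hupper z hz p).trans (mul_le_mul_of_nonneg_right (le_max_left _ _) hjap.le)) hσρ k
  have hscale : rhoScale R₀ n₀ z p ≤ (1 + M ^ 2) * σ⁻¹ ^ 2 := rhoScale_le hσ hσ1 hρ hσρ
  have hscale₀ : 0 ≤ rhoScale R₀ n₀ z p := zero_le_one.trans (hf.one_le (⟨z, hz⟩, p))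
  calc C * (1 * ‖rho n R₀ n₀ z p‖ ^ k) * rhoScale R₀ n₀ z p ^ (α + β) * (jap p.2)⁻¹ ^ β
      ≤ C * (1 * (M ^ |k| * σ⁻¹ ^ kminus k * jap p.2 ^ k)) *
          ((1 + M ^ 2) * σ⁻¹ ^ 2) ^ (α + β) * (jap p.2)⁻¹ ^ β := by gcongr
    _ = C * M ^ |k| * (1 + M ^ 2) ^ (α + β) * (σ⁻¹ ^ kminus k * σ⁻¹ ^ (2 * (α + β))) *
          (jap p.2 ^ k * (jap p.2)⁻¹ ^ β) := by
        rw [pow_mul, mul_pow (1 + M ^ 2)]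
        ring
    _ = _ := by rw [zpow_mul_inv_pow_eq_rpow hjap]

variable {δ : ℝ} (hδ : 0 < δ) {φ : ℝ → ℝ} (sφ : ContDiff ℝ (⊤ : ℕ∞) φ) (hφ : HasCompactSupport φ)
include hδ sφ hφ

theorem exists_norm_Dmix_cutoff_mul_le {c : ℝ} (hc₀ : 0 < c) (s : ℝ) (α β : ℕ) :
    ∃ C : ℝ, 0 ≤ C ∧ ∀ z, Zall z →
      ∀ (v : Fin α → EuclideanSpace ℝ (Fin n)) (w : Fin β → EuclideanSpace ℝ (Fin n)),
        (∀ i, ‖v i‖ ≤ 1) → (∀ i, ‖w i‖ ≤ 1) → ∀ p, ∀ σ, 0 < σ → σ ≤ 1 →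
        c * σ ≤ ‖rho n R₀ n₀ z p‖ →
        ‖Dmix n (fun q => (φ (glancingArg R₀ n₀ δ q) : ℂ) * f z q) α β v w p‖ ≤
          C * (σ⁻¹ ^ kminus k * σ⁻¹ ^ (2 * (α + β))) * jap p.2 ^ (s - β) := by
  obtain ⟨C, hC, h⟩ := hf.exists_norm_Dmix_mul_le hc (hc.symbolBounds_cutoff hδ sφ hφ) hc₀ α β
  obtain ⟨B, hB⟩ := hφ.isCompact.isBounded.subset_closedBall 0
  obtain ⟨K, -, hK⟩ := hc.exists_sq_jap_le_of_abs_glancingArg_le hδ (B := B)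
  refine ⟨C * |K| ^ |(k : ℝ) - s|, by positivity, fun z hz v w hv hw p σ hσ hσ1 hρσ => ?_⟩
  have hjap := jap_pos p.2
  by_cases hp : glancingArg R₀ n₀ δ p ∈ tsupport φ
  · have hjapK : jap p.2 ≤ |K| := ((le_self_pow₀ (one_le_jap p.2) two_ne_zero).trans
      (hK p (by simpa using hB hp))).trans (le_abs_self K)
    have horder := rpow_le_rpow_abs_mul_rpow (one_le_jap p.2) hjapK ((k : ℝ) - β) (s - β)
    rw [sub_sub_sub_cancel_right] at horder
    calc _ ≤ C * (σ⁻¹ ^ kminus k * σ⁻¹ ^ (2 * (α + β))) * jap p.2 ^ ((k : ℝ) - β) :=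
          h z hz v w hv hw p σ hσ hσ1 hρσ
      _ ≤ C * (σ⁻¹ ^ kminus k * σ⁻¹ ^ (2 * (α + β))) *
          (|K| ^ |(k : ℝ) - s| * jap p.2 ^ (s - β)) := by gcongr
      _ = _ := by ring
  · have hzero : (fun q => (φ (glancingArg R₀ n₀ δ q) : ℂ) * f z q) =ᶠ[nhds p] fun _ => 0 := by
      filter_upwards [(hc.continuous_glancingArg.continuousAt (x := p)).eventually
        (notMem_tsupport_iff_eventuallyEq.1 hp)] with q hq
      rw [hq, Pi.zero_apply, Complex.ofReal_zero, zero_mul]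
    rw [Dmix_eq_zero_of_eventuallyEq hzero, norm_zero]
    positivity

end RhoPowerBounds

/-- The family `ω z • a z` is bounded in the symbol class `𝒮_δ^s`, with `h z` the value of the
semiclassical parameter. -/
def IsSymbolFamily (ω h : Z → ℝ) (δ s : ℝ) (a : Z → PhaseSpace n → ℂ) : Prop :=
  ∀ α β : ℕ, ∃ C : ℝ, ∀ z,
    ∀ (v : Fin α → EuclideanSpace ℝ (Fin n)) (w : Fin β → EuclideanSpace ℝ (Fin n)),
      (∀ i, ‖v i‖ ≤ 1) → (∀ i, ‖w i‖ ≤ 1) → ∀ p, ω z * ‖Dmix n (a z) α β v w p‖ ≤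
        C * h z ^ (-δ * ((α : ℝ) + β)) * jap p.2 ^ (s - β)

theorem IsSymbolFamily.and {ω h : Z → ℝ} {δ s : ℝ} {a b : Z → PhaseSpace n → ℂ}
    (hh : ∀ z, 0 ≤ h z) (ha : IsSymbolFamily ω h δ s a) (hb : IsSymbolFamily ω h δ s b) (α β : ℕ) :
    ∃ C : ℝ, ∀ z,
    ∀ (v : Fin α → EuclideanSpace ℝ (Fin n)) (w : Fin β → EuclideanSpace ℝ (Fin n)),
      (∀ i, ‖v i‖ ≤ 1) → (∀ i, ‖w i‖ ≤ 1) → ∀ p,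
      ω z * ‖Dmix n (a z) α β v w p‖ ≤ C * h z ^ (-δ * ((α : ℝ) + β)) * jap p.2 ^ (s - β) ∧
      ω z * ‖Dmix n (b z) α β v w p‖ ≤ C * h z ^ (-δ * ((α : ℝ) + β)) * jap p.2 ^ (s - β) := by
  obtain ⟨C, hC⟩ := ha α β
  obtain ⟨D, hD⟩ := hb α β
  refine ⟨max C D, fun z v w hv hw p => ⟨(hC z v w hv hw p).trans ?_,
    (hD z v w hv hw p).trans ?_⟩⟩
  all_goals
    have := Real.rpow_nonneg (hh z) (-δ * ((α : ℝ) + β))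
    have := Real.rpow_nonneg (jap_pos p.2).le (s - β)
    gcongr
  exacts [le_max_left _ _, le_max_right _ _]

namespace RhoPowerBounds

variable (hc : AdmissibleCoeffs R₀ n₀) {k : ℤ} {f : ℂ → PhaseSpace n → ℂ}
  (hf : RhoPowerBounds R₀ n₀ k f) {δ : ℝ} (hδ : 0 < δ) {φ : ℝ → ℝ}
  (sφ : ContDiff ℝ (⊤ : ℕ∞) φ) (hφ : HasCompactSupport φ)
include hc hf hδ sφ hφ

theorem isSymbolFamily_one_sub_cutoff_mul (hφone : ∀ t, |t| ≤ 1 → φ t = 1) :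
    IsSymbolFamily (fun _ => 1) (fun _ => 1) 0 k fun (z : {z // Zall z}) q =>
      (1 - (φ (glancingArg R₀ n₀ δ q) : ℂ)) * f z q := by
  intro α β
  have hψ : SymbolBounds (fun (_ : {z // Zall z}) q => 1 - (φ (glancingArg R₀ n₀ δ q) : ℂ))
      (fun _ => 1) (fun _ => 1) :=
    ((SymbolBounds.const (c := fun _ => (1 : ℂ)) (K := 1) (by simp)).add
      ((hc.symbolBounds_cutoff hδ sφ hφ).clm_apply (-.id ℝ ℂ))).congr
      fun _ _ => (sub_eq_add_neg _ _).symm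
  obtain ⟨c, hc₀, hlow⟩ := hc.exists_le_norm_rho_of_one_le_glancingArg hδ
  obtain ⟨C, hC, h⟩ := hf.exists_norm_Dmix_mul_le hc hψ hc₀ α β
  refine ⟨C, fun z v w hv hw p => ?_⟩
  have hjap := jap_pos p.2
  simp only [one_mul, Real.one_rpow, mul_one]
  rcases le_or_gt 1 |glancingArg R₀ n₀ δ p| with hp | hp
  · simpa using h z z.2 v w hv hw p 1 one_pos le_rfl (by simpa using hlow z z.2 p hp)
  · have hzero : (fun q => (1 - (φ (glancingArg R₀ n₀ δ q) : ℂ)) * f z q) =ᶠ[nhds p]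
        fun _ => 0 := by
      filter_upwards [hc.continuous_glancingArg.abs.continuousAt.eventually (gt_mem_nhds hp)]
        with q hq
      rw [hφone _ hq.le, Complex.ofReal_one, sub_self, zero_mul]
    rw [Dmix_eq_zero_of_eventuallyEq hzero, norm_zero]
    positivity

theorem isSymbolFamily_cutoff_mul_of_ZoneEps {ε : ℝ} (hε : 0 ≤ ε) (s : ℝ) :
    IsSymbolFamily (fun i => i.1.1 ^ ((kminus k : ℝ) / 4)) (fun i => i.1.1) (1 / 2 - ε) s
      fun (i : {i : ℝ × ℂ // i.1 ∈ Set.Ioc (0 : ℝ) 1 ∧ ZoneEps i.1 (1 / 2 - ε) i.2}) q =>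
        (φ (glancingArg R₀ n₀ δ q) : ℂ) * f i.1.2 q := by
  intro α β
  obtain ⟨c, hc₀, hlow⟩ := hc.exists_mul_sqrt_abs_im_le_norm_rho
  obtain ⟨C, hC, hDmix⟩ := hf.exists_norm_Dmix_cutoff_mul_le hc hδ sφ hφ hc₀ s α β
  refine ⟨C, fun ⟨⟨h, z⟩, hh, hz, hhz⟩ v w hv hw p => ?_⟩
  have hjap := jap_pos p.2
  have hgain := rpow_mul_inv_sqrt_zpow_mul_inv_sqrt_pow_le hh hε hhz (kminus_nonneg k) (α + β)
  push_cast at hgain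
  have hbound := hDmix z (Or.inl hz) v w hv hw p √|z.im| (Real.sqrt_pos.2 hz.2.1)
    (Real.sqrt_le_one.2 hz.2.2) (hlow z p)
  calc h ^ ((kminus k : ℝ) / 4) * ‖Dmix n _ α β v w p‖
      ≤ h ^ ((kminus k : ℝ) / 4) * _ :=
        mul_le_mul_of_nonneg_left hbound (Real.rpow_nonneg hh.1.le _)
    _ = C * (h ^ ((kminus k : ℝ) / 4) *
          ((√|z.im|)⁻¹ ^ kminus k * (√|z.im|)⁻¹ ^ (2 * (α + β)))) * jap p.2 ^ (s - β) := by ring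
    _ ≤ C * h ^ (-(1 / 2 - ε) * ((α : ℝ) + β)) * jap p.2 ^ (s - β) := by gcongr

theorem isSymbolFamily_cutoff_mul_of_Ztwothree (s : ℝ) :
    IsSymbolFamily (fun _ => 1) (fun _ => 1) 0 s fun (z : {z // Ztwothree z}) q =>
      (φ (glancingArg R₀ n₀ δ q) : ℂ) * f z q := by
  intro α β
  obtain ⟨c, hc₀, hlow⟩ := hc.exists_le_norm_rho_of_Ztwothree
  obtain ⟨C, -, h⟩ := hf.exists_norm_Dmix_cutoff_mul_le hc hδ sφ hφ hc₀ s α β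
  refine ⟨C, fun z v w hv hw p => ?_⟩
  simpa using h z (Or.inr z.2) v w hv hw p 1 one_pos le_rfl (by simpa using hlow z z.2 p)

end RhoPowerBounds

end Coefficients

end PhaseSpace

theorem statement_8_general {n : ℕ}
    {R₀ : EuclideanSpace ℝ (Fin n) → (EuclideanSpace ℝ (Fin n) →L[ℝ] EuclideanSpace ℝ (Fin n))}
    {n₀ : EuclideanSpace ℝ (Fin n) → ℝ} (hc : AdmissibleCoeffs R₀ n₀)
    {φ₀ : ℝ → ℝ} (hφ₀ : ContDiff ℝ (⊤ : ℕ∞) φ₀) (hφ₀supp : HasCompactSupport φ₀)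
    (hφ₀one : ∀ t, |t| ≤ 1 → φ₀ t = 1) {δ₁ : ℝ} (hδ₁ : 0 < δ₁) :
    ∀ k : ℤ, ∀ N : ℕ,
      (∀ α β : ℕ, ∃ C : ℝ, ∀ z, Zall z →
        ∀ (v : Fin α → EuclideanSpace ℝ (Fin n)) (w : Fin β → EuclideanSpace ℝ (Fin n)),
          (∀ i, ‖v i‖ ≤ 1) → (∀ i, ‖w i‖ ≤ 1) → ∀ p,
          ‖Dmix n (fun q => (1 - φ₀ ((1 - rZero n R₀ q / n₀ q.1) / δ₁)) *
              rho n R₀ n₀ z q ^ k) α β v w p‖ ≤ C * jap p.2 ^ ((k : ℝ) - β) ∧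
          ‖Dmix n (fun q => (1 - φ₀ ((1 - rZero n R₀ q / n₀ q.1) / δ₁)) *
              ((‖rho n R₀ n₀ z q‖ : ℂ) ^ k)) α β v w p‖ ≤ C * jap p.2 ^ ((k : ℝ) - β)) ∧
      (∀ ε : ℝ, 0 < ε → ε < 1 / 2 →
        ∀ α β : ℕ, ∃ C : ℝ, ∀ h ∈ Set.Ioc (0 : ℝ) 1, ∀ z, ZoneEps h (1 / 2 - ε) z →
        ∀ (v : Fin α → EuclideanSpace ℝ (Fin n)) (w : Fin β → EuclideanSpace ℝ (Fin n)),
          (∀ i, ‖v i‖ ≤ 1) → (∀ i, ‖w i‖ ≤ 1) → ∀ p,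
          h ^ ((kminus k : ℝ) / 4) *
            ‖Dmix n (fun q => φ₀ ((1 - rZero n R₀ q / n₀ q.1) / δ₁) *
                rho n R₀ n₀ z q ^ k) α β v w p‖ ≤
              C * h ^ (-(1 / 2 - ε) * ((α : ℝ) + β)) * jap p.2 ^ (-(N : ℝ) - β) ∧
          h ^ ((kminus k : ℝ) / 4) *
            ‖Dmix n (fun q => φ₀ ((1 - rZero n R₀ q / n₀ q.1) / δ₁) *
                ((‖rho n R₀ n₀ z q‖ : ℂ) ^ k)) α β v w p‖ ≤
              C * h ^ (-(1 / 2 - ε) * ((α : ℝ) + β)) * jap p.2 ^ (-(N : ℝ) - β)) ∧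
      (∀ α β : ℕ, ∃ C : ℝ, ∀ z, Ztwothree z →
        ∀ (v : Fin α → EuclideanSpace ℝ (Fin n)) (w : Fin β → EuclideanSpace ℝ (Fin n)),
          (∀ i, ‖v i‖ ≤ 1) → (∀ i, ‖w i‖ ≤ 1) → ∀ p,
          ‖Dmix n (fun q => φ₀ ((1 - rZero n R₀ q / n₀ q.1) / δ₁) *
              rho n R₀ n₀ z q ^ k) α β v w p‖ ≤ C * jap p.2 ^ (-(N : ℝ) - β) ∧
          ‖Dmix n (fun q => φ₀ ((1 - rZero n R₀ q / n₀ q.1) / δ₁) *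
              ((‖rho n R₀ n₀ z q‖ : ℂ) ^ k)) α β v w p‖ ≤
            C * jap p.2 ^ (-(N : ℝ) - β)) := by
  intro k N
  have hρ := hc.rhoPowerBounds_zpow k
  have hnorm := hc.rhoPowerBounds_norm_zpow k
  refine ⟨fun α β => ?_, fun ε hε _ α β => ?_, fun α β => ?_⟩
  · simpa [glancingArg] using
      (hρ.isSymbolFamily_one_sub_cutoff_mul hc hδ₁ hφ₀ hφ₀supp hφ₀one).and
        (fun _ => zero_le_one) (hnorm.isSymbolFamily_one_sub_cutoff_mul hc hδ₁ hφ₀ hφ₀supp hφ₀one)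
        α β
  · obtain ⟨C, hC⟩ := (hρ.isSymbolFamily_cutoff_mul_of_ZoneEps hc hδ₁ hφ₀ hφ₀supp hε.le (-N)).and
      (fun i => i.2.1.1.le)
      (hnorm.isSymbolFamily_cutoff_mul_of_ZoneEps hc hδ₁ hφ₀ hφ₀supp hε.le (-N)) α β
    exact ⟨C, fun h hh z hz => hC ⟨(h, z), hh, hz⟩⟩
  · simpa [glancingArg] using
      (hρ.isSymbolFamily_cutoff_mul_of_Ztwothree hc hδ₁ hφ₀ hφ₀supp (-N)).and
        (fun _ => zero_le_one)
        (hnorm.isSymbolFamily_cutoff_mul_of_Ztwothree hc hδ₁ hφ₀ hφ₀supp (-N)) α β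

/-- **Formulas (3.5), (3.6), (3.7).** For every integer `k` and every `N ≥ 0`:
(i) `(1−χ)ρ^k, (1−χ)|ρ|^k ∈ 𝒮_0^k` uniformly for `z ∈ Z₁ ∪ Z₂ ∪ Z₃`;
(ii) `h^{k₋/4} χρ^k, h^{k₋/4} χ|ρ|^k ∈ 𝒮_{1/2−ε}^{−N}` for `z ∈ Z₁(1/2−ε)`;
(iii) `χρ^k, χ|ρ|^k ∈ 𝒮_0^{−N}` for `z ∈ Z₂ ∪ Z₃`.
Here `χ = φ₀((1−r₀/n₀)/δ₁)` is the glancing cutoff, with `0 < δ₁ ≪ 1` fixed. -/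
theorem statement_8 (n : ℕ) (hn : 0 < n)
    (R₀ : EuclideanSpace ℝ (Fin n) → (EuclideanSpace ℝ (Fin n) →L[ℝ] EuclideanSpace ℝ (Fin n)))
    (hR₀smooth : ContDiff ℝ (⊤ : ℕ∞) R₀)
    (hR₀bdd : ∀ m : ℕ, ∃ C : ℝ, ∀ x, ‖iteratedFDeriv ℝ m R₀ x‖ ≤ C)
    (hR₀sym : ∀ x ξ ζ, (inner ℝ (R₀ x ξ) ζ : ℝ) = (inner ℝ ξ (R₀ x ζ) : ℝ))
    (hR₀ell : ∃ c : ℝ, 0 < c ∧ ∀ x ξ, c * ‖ξ‖ ^ 2 ≤ (inner ℝ (R₀ x ξ) ξ : ℝ))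
    (n₀ : EuclideanSpace ℝ (Fin n) → ℝ) (hn₀smooth : ContDiff ℝ (⊤ : ℕ∞) n₀)
    (hn₀bdd : ∀ m : ℕ, ∃ C : ℝ, ∀ x, ‖iteratedFDeriv ℝ m n₀ x‖ ≤ C)
    (hn₀pos : ∃ c : ℝ, 0 < c ∧ ∀ x, c ≤ n₀ x)
    (φ₀ : ℝ → ℝ) (hφ₀ : ContDiff ℝ (⊤ : ℕ∞) φ₀) (hφ₀range : ∀ t, φ₀ t ∈ Set.Icc (0 : ℝ) 1)
    (hφ₀one : ∀ t, |t| ≤ 1 → φ₀ t = 1) (hφ₀zero : ∀ t, 2 ≤ |t| → φ₀ t = 0)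
    (δ₁ : ℝ) (hδ₁ : 0 < δ₁) (hδ₁' : δ₁ < 1 / 2)
    -- |ρ| ≥ C √|Im z| for z ∈ Z₁ on supp χ, and |ρ| ≥ C > 0 for z ∈ Z₂ ∪ Z₃, or for
    -- z ∈ Z₁ on supp (1−χ)  (Lemma 3.1 of [V1]; valid since δ₁ is small)
    (hχlow : ∃ c : ℝ, 0 < c ∧ ∀ z, Zone z → ∀ p,
      φ₀ ((1 - rZero n R₀ p / n₀ p.1) / δ₁) ≠ 0 →
      c * Real.sqrt |z.im| ≤ ‖rho n R₀ n₀ z p‖)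
    (hρlow : ∃ c : ℝ, 0 < c ∧ ∀ z p,
      (Ztwothree z ∨ (Zone z ∧ φ₀ ((1 - rZero n R₀ p / n₀ p.1) / δ₁) ≠ 1)) →
      c ≤ ‖rho n R₀ n₀ z p‖) :
    ∀ k : ℤ, ∀ N : ℕ,
      -- (i)  (1−χ)ρ^k, (1−χ)|ρ|^k ∈ 𝒮_0^k uniformly in z ∈ Z₁ ∪ Z₂ ∪ Z₃
      (∀ α β : ℕ, ∃ C : ℝ, ∀ z, Zall z →
        ∀ (v : Fin α → EuclideanSpace ℝ (Fin n)) (w : Fin β → EuclideanSpace ℝ (Fin n)),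
          (∀ i, ‖v i‖ ≤ 1) → (∀ i, ‖w i‖ ≤ 1) → ∀ p,
          ‖Dmix n (fun q => (1 - φ₀ ((1 - rZero n R₀ q / n₀ q.1) / δ₁)) *
              rho n R₀ n₀ z q ^ k) α β v w p‖ ≤ C * jap p.2 ^ ((k : ℝ) - β) ∧
          ‖Dmix n (fun q => (1 - φ₀ ((1 - rZero n R₀ q / n₀ q.1) / δ₁)) *
              ((‖rho n R₀ n₀ z q‖ : ℂ) ^ k)) α β v w p‖ ≤ C * jap p.2 ^ ((k : ℝ) - β)) ∧
      -- (ii)  h^{k₋/4} χρ^k, h^{k₋/4} χ|ρ|^k ∈ 𝒮_{1/2−ε}^{−N} for z ∈ Z₁(1/2−ε)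
      (∀ ε : ℝ, 0 < ε → ε < 1 / 2 →
        ∀ α β : ℕ, ∃ C : ℝ, ∀ h ∈ Set.Ioc (0 : ℝ) 1, ∀ z, ZoneEps h (1 / 2 - ε) z →
        ∀ (v : Fin α → EuclideanSpace ℝ (Fin n)) (w : Fin β → EuclideanSpace ℝ (Fin n)),
          (∀ i, ‖v i‖ ≤ 1) → (∀ i, ‖w i‖ ≤ 1) → ∀ p,
          h ^ ((kminus k : ℝ) / 4) *
            ‖Dmix n (fun q => φ₀ ((1 - rZero n R₀ q / n₀ q.1) / δ₁) *
                rho n R₀ n₀ z q ^ k) α β v w p‖ ≤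
              C * h ^ (-(1 / 2 - ε) * ((α : ℝ) + β)) * jap p.2 ^ (-(N : ℝ) - β) ∧
          h ^ ((kminus k : ℝ) / 4) *
            ‖Dmix n (fun q => φ₀ ((1 - rZero n R₀ q / n₀ q.1) / δ₁) *
                ((‖rho n R₀ n₀ z q‖ : ℂ) ^ k)) α β v w p‖ ≤
              C * h ^ (-(1 / 2 - ε) * ((α : ℝ) + β)) * jap p.2 ^ (-(N : ℝ) - β)) ∧
      -- (iii)  χρ^k, χ|ρ|^k ∈ 𝒮_0^{−N} for z ∈ Z₂ ∪ Z₃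
      (∀ α β : ℕ, ∃ C : ℝ, ∀ z, Ztwothree z →
        ∀ (v : Fin α → EuclideanSpace ℝ (Fin n)) (w : Fin β → EuclideanSpace ℝ (Fin n)),
          (∀ i, ‖v i‖ ≤ 1) → (∀ i, ‖w i‖ ≤ 1) → ∀ p,
          ‖Dmix n (fun q => φ₀ ((1 - rZero n R₀ q / n₀ q.1) / δ₁) *
              rho n R₀ n₀ z q ^ k) α β v w p‖ ≤ C * jap p.2 ^ (-(N : ℝ) - β) ∧
          ‖Dmix n (fun q => φ₀ ((1 - rZero n R₀ q / n₀ q.1) / δ₁) *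
              ((‖rho n R₀ n₀ z q‖ : ℂ) ^ k)) α β v w p‖ ≤
            C * jap p.2 ^ (-(N : ℝ) - β)) := by
  exact statement_8_general ⟨⟨hR₀smooth, hR₀bdd⟩, ⟨hn₀smooth, hn₀bdd⟩, hR₀ell, hn₀pos⟩ hφ₀
    (.intro (isCompact_closedBall 0 2) fun t ht => hφ₀zero t (le_of_not_ge (by simpa using ht)))
    hφ₀one hδ₁

end
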